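/- arXiv:2601.18590 — 2 statements merged into one kernel-verified Lean document; each statement's English description precedes it below -/
import Mathlib

section
/- Let q be a prime power and let δ ∈ (0, 1 − 1/q) be a constant. Then there exists a constant c_δ > 0, depending only on q and δ, such that for all sufficiently large n the following holds with d = ⌊δn⌋: if k is a positive integer satisfying (q^k − 1)/(q − 1) < c_δ · √n · q^n / ∑_{i=0}^{d−1} C(n,i)(q−1)^i, then there exists a k-dimensional linear subspace C ⊆ 𝔽_q^n all of whose nonzero elements have Hamming weight at least d (i.e., an [n,k] linear code over 𝔽_q with minimum Hamming distance at least d). -/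
open Finset
open scoped Classical

/-!
Let `B` be the ball of the words of weight less than `d` and let `G : F^(k+1) → F^n` be a uniformly
random linear map. The images of linearly independent vectors are independent and uniform, so `G`
maps on average at most `μ = q^(k+1) |B| / q^n` nonzero vectors into `B`. With positive probability
at most `2μ` nonzero vectors are mapped into `B` and none of them is the sum of `t ≥ 2` linearly
independent others. Every vector mapped into `B` is then a multiple of an element of one fixed
basis, so the hyperplane of coordinate sum zero meets `G⁻¹(B)` in `0` only, and its image under `G`
is the code.

The expected number of bad `t`-tuples is at most `μ^t ρ^n`, because two random words of `B` sum into
a given translate of `B` with probability at most `ρ^n`, where `ρ < 1`. Indeed two errors of the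
`q`-ary symmetric channel with error probability `δ` cancel with probability `P`, which is less than
`1 - δ` when `δ < 1 - 1/q`, so their sum has typical weight `(1 - P) n > δn`; an exponential tilt by
`s` close to `1` makes this a large deviation bound. As `ρ` is fixed, every `μ` with
`μ log n = o(n)` is affordable, in particular `μ` of order `√n`.
-/

open Filter Topology

section LinearAlgebra

variable {F V W : Type*} [Field F] [AddCommGroup V] [Module F V] [AddCommGroup W] [Module F W]

/-- No element of `S` is the sum of two or more linearly independent elements of `S`. When `S` is
stable under nonzero scalars, this confines `S` to the coordinate axes of some basis. -/
def IndepSumFree (F : Type*) {V : Type*} [Field F] [AddCommGroup V] [Module F V]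
    (S : Set V) : Prop :=
  ∀ t : ℕ, 2 ≤ t → ∀ p : Fin t → V, LinearIndependent F p → (∀ i, p i ∈ S) → ∑ i, p i ∉ S

theorem IndepSumFree.sum_notMem {S : Set V} (hS : IndepSumFree F S) {ι : Type*} {s : Finset ι}
    (hs : 2 ≤ #s) {p : ι → V} (hp : LinearIndependent F fun i : s ↦ p i) (hpS : ∀ i ∈ s, p i ∈ S) :
    ∑ i ∈ s, p i ∉ S := by
  have hsum := hS #s hs (fun j ↦ p (s.equivFin.symm j)) (hp.comp _ s.equivFin.symm.injective)
    fun j ↦ hpS _ (s.equivFin.symm j).2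
  rwa [Equiv.sum_comp s.equivFin.symm fun i : s ↦ p i, sum_coe_sort s p] at hsum

theorem IndepSumFree.exists_smul_eq_of_mem_span {S : Set V} (hS : IndepSumFree F S)
    (hsmul : ∀ c : F, c ≠ 0 → ∀ v ∈ S, c • v ∈ S) {b : Set V} (hbS : b ⊆ S)
    (hb : LinearIndepOn F id b) {v : V} (hvS : v ∈ S) (hv : v ∈ Submodule.span F b)
    (hv0 : v ≠ 0) : ∃ c : F, c ≠ 0 ∧ ∃ w ∈ b, c • w = v := by
  obtain ⟨c, hcb, rfl⟩ := Submodule.mem_span_set.1 hv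
  have hc : ∀ w ∈ c.support, c w ≠ 0 := fun w ↦ Finsupp.mem_support_iff.1
  have hcard : #c.support < 2 := by
    by_contra! htwo
    have hindep : LinearIndependent F fun w : c.support ↦ (w : V) := hb.mono hcb
    exact hS.sum_notMem htwo
      (hindep.units_smul fun w ↦ Units.mk0 (c w) (hc w w.2))
      (fun w hw ↦ hsmul _ (hc w hw) _ (hbS (hcb hw))) hvS
  have hpos : 0 < #c.support := by
    rw [Finset.card_pos, Finsupp.support_nonempty_iff]
    rintro rfl
    exact hv0 Finsupp.sum_zero_index
  obtain ⟨w, hw⟩ := Finset.card_eq_one.1 (by omega : #c.support = 1)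
  have hwc : w ∈ c.support := hw ▸ mem_singleton_self w
  exact ⟨c w, hc w hwc, w, hcb hwc, by rw [Finsupp.sum, hw, sum_singleton]⟩

theorem IndepSumFree.exists_dual_apply_ne_zero [Nontrivial V] {S : Set V} (hS : IndepSumFree F S)
    (hsmul : ∀ c : F, c ≠ 0 → ∀ v ∈ S, c • v ∈ S) :
    ∃ f : Module.Dual F V, f ≠ 0 ∧ ∀ v ∈ S, v ≠ 0 → f v ≠ 0 := by
  obtain ⟨b, hbS, hspan, hb⟩ := exists_linearIndependent F S
  let B := Module.Basis.extend hb
  have hB : ∀ w ∈ b, B.sumCoords w = 1 := fun w hw ↦ by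
    have hBw : B ⟨w, Module.Basis.subset_extend hb hw⟩ = w := Module.Basis.extend_apply_self hb _
    rw [← B.sumCoords_self_apply ⟨w, Module.Basis.subset_extend hb hw⟩, hBw]
  refine ⟨B.sumCoords, fun hzero ↦ ?_, fun v hvS hv0 ↦ ?_⟩
  · obtain ⟨i⟩ := B.index_nonempty
    simpa [hzero] using B.sumCoords_self_apply i
  · obtain ⟨c, hc, w, hw, rfl⟩ := hS.exists_smul_eq_of_mem_span hsmul hbS hb hvS
      (hspan ▸ Submodule.subset_span hvS) hv0
    simpa [hB w hw] using hc

theorem exists_submodule_finrank_eq_of_indepSumFree_preimage [FiniteDimensional F V] {k : ℕ}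
    (hV : Module.finrank F V = k + 1) {B : Set W} (h0 : 0 ∈ B)
    (hsmul : ∀ c : F, c ≠ 0 → ∀ w ∈ B, c • w ∈ B) {G : V →ₗ[F] W}
    (hG : IndepSumFree F (G ⁻¹' B)) :
    ∃ C : Submodule F W, Module.finrank F C = k ∧ ∀ w ∈ C, w ≠ 0 → w ∉ B := by
  have : Nontrivial V := Module.nontrivial_of_finrank_pos (R := F) (by omega)
  obtain ⟨f, hf0, hf⟩ := hG.exists_dual_apply_ne_zero fun c hc v hv ↦ by
    simpa only [Set.mem_preimage, map_smul] using hsmul c hc _ hv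
  have hinj : Function.Injective (G.domRestrict f.ker) := by
    refine (injective_iff_map_eq_zero _).2 fun v hv ↦ ?_
    by_contra hv0
    exact hf v (by simpa [show G v = 0 from hv] using h0) (by simpa using hv0) v.2
  refine ⟨(G.domRestrict f.ker).range, ?_, ?_⟩
  · have hker := Module.Dual.finrank_ker_add_one_of_ne_zero hf0
    rw [LinearMap.finrank_range_of_inj hinj]
    omega
  · rintro _ ⟨v, rfl⟩ hw0 hwB
    exact hf v hwB (fun hv0 ↦ hw0 (by simp [hv0])) v.2

end LinearAlgebra

section SumTuples

variable {W : Type*} [AddCommGroup W]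

/-- The `t`-tuples of elements of `B` whose sum is again in `B`. -/
noncomputable def sumTuples (B : Finset W) (t : ℕ) : Finset (Fin t → W) :=
  {y ∈ Fintype.piFinset fun _ ↦ B | ∑ i, y i ∈ B}

/-- The pairs of elements of `B` whose sum lies in the translate `B - v`. -/
noncomputable def shiftedSumPairs (B : Finset W) (v : W) : Finset (W × W) :=
  {y ∈ B ×ˢ B | y.1 + y.2 + v ∈ B}

theorem card_sumTuples_le {B : Finset W} {D : ℝ} (hD : ∀ v, #(shiftedSumPairs B v) ≤ D) (s : ℕ) :
    (#(sumTuples B (s + 2)) : ℝ) ≤ D * (#B : ℝ) ^ s := by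
  have hmaps : Set.MapsTo (fun (y : Fin (s + 2) → W) (i : Fin s) ↦ y i.succ.succ)
      (sumTuples B (s + 2)) (Fintype.piFinset fun _ : Fin s ↦ B : Finset (Fin s → W)) := by
    intro y hy
    simp only [sumTuples, coe_filter, Fintype.mem_piFinset, Set.mem_ofPred_eq] at hy
    simpa using fun i : Fin s ↦ hy.1 i.succ.succ
  have hfiber (u : Fin s → W) : #{y ∈ sumTuples B (s + 2) | (fun i ↦ y i.succ.succ) = u} ≤
      #(shiftedSumPairs B (∑ i, u i)) := by
    refine card_le_card_of_injOn (fun y ↦ (y 0, y 1)) ?_ ?_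
    · intro y hy
      simp only [sumTuples, coe_filter, mem_filter, Fintype.mem_piFinset, Set.mem_ofPred_eq] at hy
      obtain ⟨⟨hyB, hsum⟩, rfl⟩ := hy
      rw [Fin.sum_univ_succ, Fin.sum_univ_succ, ← add_assoc] at hsum
      simpa [shiftedSumPairs, hyB] using hsum
    · intro y hy y' hy' hyy'
      obtain ⟨h0, h1⟩ := Prod.mk.inj hyy'
      have htail := (mem_filter.1 hy).2.trans (mem_filter.1 hy').2.symm
      exact funext <| Fin.cases h0 <| Fin.cases h1 fun i ↦ congrFun htail i
  rw [card_eq_sum_card_fiberwise hmaps, Nat.cast_sum]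
  calc ∑ u ∈ Fintype.piFinset fun _ : Fin s ↦ B,
        (#{y ∈ sumTuples B (s + 2) | (fun i ↦ y i.succ.succ) = u} : ℝ)
      ≤ ∑ _u ∈ Fintype.piFinset fun _ : Fin s ↦ B, D :=
        sum_le_sum fun u _ ↦ (Nat.cast_le.2 (hfiber u)).trans (hD _)
    _ = D * (#B : ℝ) ^ s := by simp [mul_comm]

end SumTuples

section RandomLinearMap

theorem card_filter_map_mem_mul_card {A B : Type*} [AddGroup A] [AddGroup B] [Fintype A] [Fintype B]
    {φ : A →+ B} (hφ : Function.Surjective φ) (s : Finset B) :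
    #{a | φ a ∈ s} * Fintype.card B = #s * Fintype.card A := by
  have hpreimage (u : Finset B) : #{a | φ a ∈ u} = #u * #{a | φ a = 0} := by
    rw [card_eq_sum_card_fiberwise (f := φ) (t := u) fun a ha ↦ by simpa using ha]
    refine sum_const_nat fun b hb ↦ ?_
    rw [filter_filter, ← AddMonoidHom.card_fiber_eq_of_mem_range φ (hφ b) (hφ 0)]
    exact congrArg card (filter_congr fun a _ ↦ ⟨And.right, fun h ↦ ⟨h ▸ hb, h⟩⟩)
  have huniv : Fintype.card A = Fintype.card B * #{a | φ a = 0} := by simpa using hpreimage univ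
  rw [hpreimage, huniv]
  ring

variable {F V W ι : Type*} [Field F] [AddCommGroup V] [Module F V] [AddCommGroup W] [Module F W]

theorem exists_linearMap_apply_eq {p : ι → V} (hp : LinearIndependent F p) (y : ι → W) :
    ∃ G : V →ₗ[F] W, ∀ i, G (p i) = y i := by
  obtain ⟨g, hg⟩ := (Finsupp.linearCombination F p).exists_leftInverse_of_injective
    (LinearMap.ker_eq_bot.2 hp)
  refine ⟨Finsupp.linearCombination F y ∘ₗ g, fun i ↦ ?_⟩
  simpa using congrArg (Finsupp.linearCombination F y) (LinearMap.congr_fun hg (Finsupp.single i 1))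

theorem card_linearMap_apply_mem [Fintype W] [Fintype (V →ₗ[F] W)] [Fintype ι]
    {p : ι → V} (hp : LinearIndependent F p) (A : Finset (ι → W)) :
    #{G : V →ₗ[F] W | (fun i ↦ G (p i)) ∈ A} * Fintype.card W ^ Fintype.card ι =
      #A * Fintype.card (V →ₗ[F] W) := by
  let φ : (V →ₗ[F] W) →+ (ι → W) := ⟨⟨fun G i ↦ G (p i), rfl⟩, fun _ _ ↦ rfl⟩
  have hφ : Function.Surjective φ := fun y ↦
    (exists_linearMap_apply_eq hp y).imp fun G hG ↦ funext hG
  have hcard := card_filter_map_mem_mul_card hφ A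
  rw [Fintype.card_fun] at hcard
  convert hcard
  rfl

variable [Fintype V]

/-- The linearly independent tuples that `G` maps into `A`. -/
noncomputable def indepTuples [Fintype ι] (G : V →ₗ[F] W) (A : Finset (ι → W)) :
    Finset (ι → V) :=
  {p | LinearIndependent F p ∧ (fun i ↦ G (p i)) ∈ A}

theorem le_card_indepTuples_one {G : V →ₗ[F] W} {B : Finset W} {t : ℕ} {p : Fin t → V}
    (hp : LinearIndependent F p) (hpB : ∀ i, G (p i) ∈ B) :
    t ≤ #(indepTuples G (Fintype.piFinset fun _ : Fin 1 ↦ B)) := by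
  have hinj : Function.Injective fun i (_ : Fin 1) ↦ p i := fun i j hij ↦
    hp.injective (congrFun hij 0)
  simpa using card_le_card_of_injOn (s := univ) _
    (fun i _ ↦ by simp [indepTuples, hp.ne_zero i, hpB i])
    hinj.injOn

theorem indepSumFree_preimage_of_indepTuples_eq_empty {G : V →ₗ[F] W} {B : Finset W} {M : ℕ}
    (hM : #(indepTuples G (Fintype.piFinset fun _ : Fin 1 ↦ B)) ≤ M)
    (hG : ∀ t ∈ Icc 2 M, indepTuples G (sumTuples B t) = ∅) : IndepSumFree F (G ⁻¹' B) := by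
  intro t ht p hp hpB hsum
  have hpB' : ∀ i, G (p i) ∈ B := fun i ↦ mem_coe.1 (hpB i)
  refine eq_empty_iff_forall_notMem.1
    (hG t (mem_Icc.2 ⟨ht, (le_card_indepTuples_one hp hpB').trans hM⟩)) p ?_
  have hsum' : ∑ i, G (p i) ∈ B := by rwa [← map_sum]
  simp [indepTuples, sumTuples, hp, hpB', hsum']

variable [Fintype W]

theorem sum_card_indepTuples_mul_le [Fintype (V →ₗ[F] W)] [Fintype ι] (A : Finset (ι → W)) :
    (∑ G : V →ₗ[F] W, #(indepTuples G A)) * Fintype.card W ^ Fintype.card ι ≤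
      Fintype.card V ^ Fintype.card ι * (#A * Fintype.card (V →ₗ[F] W)) := by
  have hswap : ∑ G : V →ₗ[F] W, #(indepTuples G A) =
      ∑ p : ι → V with LinearIndependent F p, #{G : V →ₗ[F] W | (fun i ↦ G (p i)) ∈ A} := by
    simp only [indepTuples, ← filter_filter]
    exact sum_card_bipartiteAbove_eq_sum_card_bipartiteBelow
      fun (G : V →ₗ[F] W) (p : ι → V) ↦ (fun i ↦ G (p i)) ∈ A
  rw [hswap, sum_mul, sum_congr rfl fun p hp ↦ card_linearMap_apply_mem (mem_filter.1 hp).2 A,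
    sum_const, smul_eq_mul]
  gcongr
  simpa using card_le_univ ({p | LinearIndependent F p} : Finset (ι → V))

theorem sum_card_indepTuples_le [Fintype (V →ₗ[F] W)] [Fintype ι] {B : Finset W}
    {A : Finset (ι → W)} {μ η : ℝ} (hη : 0 ≤ η)
    (hμ : (Fintype.card V : ℝ) * #B ≤ μ * Fintype.card W)
    (hA : (#A : ℝ) ≤ η * (#B : ℝ) ^ Fintype.card ι) :
    ∑ G : V →ₗ[F] W, (#(indepTuples G A) : ℝ) ≤
      μ ^ Fintype.card ι * η * Fintype.card (V →ₗ[F] W) := by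
  have hcount := (Nat.cast_le (α := ℝ)).2 (sum_card_indepTuples_mul_le (F := F) (V := V) A)
  push_cast at hcount
  set N : ℝ := (Fintype.card (V →ₗ[F] W) : ℝ)
  set w : ℝ := (Fintype.card W : ℝ)
  have hw : 0 < w := Nat.cast_pos.2 Fintype.card_pos
  refine le_of_mul_le_mul_right ?_ (pow_pos hw (Fintype.card ι))
  calc (∑ G : V →ₗ[F] W, (#(indepTuples G A) : ℝ)) * w ^ Fintype.card ι
      ≤ (Fintype.card V : ℝ) ^ Fintype.card ι * (#A * N) := hcount
    _ ≤ (Fintype.card V : ℝ) ^ Fintype.card ι * (η * (#B : ℝ) ^ Fintype.card ι * N) := by gcongr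
    _ = (Fintype.card V * #B : ℝ) ^ Fintype.card ι * (η * N) := by ring
    _ ≤ (μ * w) ^ Fintype.card ι * (η * N) := by gcongr
    _ = μ ^ Fintype.card ι * η * N * w ^ Fintype.card ι := by ring

theorem exists_linearMap_indepSumFree_preimage {B : Finset W} {μ η : ℝ} (hμ0 : 0 < μ) (hη : 0 ≤ η)
    (hμ : (Fintype.card V : ℝ) * #B ≤ μ * Fintype.card W)
    (hB : ∀ t, 2 ≤ t → (#(sumTuples B t) : ℝ) ≤ η * (#B : ℝ) ^ t)
    (hsum : ∑ t ∈ Icc 2 ⌊2 * μ⌋₊, μ ^ t * η < 1 / 2) :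
    ∃ G : V →ₗ[F] W, IndepSumFree F (G ⁻¹' B) := by
  have : Finite (V →ₗ[F] W) := DFunLike.finite _
  let _ : Fintype (V →ₗ[F] W) := Fintype.ofFinite _
  let X (G : V →ₗ[F] W) : ℝ := #(indepTuples G (Fintype.piFinset fun _ : Fin 1 ↦ B))
  let Y (t : ℕ) (G : V →ₗ[F] W) : ℝ := #(indepTuples G (sumTuples B t))
  have hX : ∑ G, X G ≤ μ * Fintype.card (V →ₗ[F] W) := by
    simpa using sum_card_indepTuples_le (F := F) (A := Fintype.piFinset fun _ : Fin 1 ↦ B)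
      zero_le_one hμ (by simp)
  have hY (t) (ht : t ∈ Icc 2 ⌊2 * μ⌋₊) :
      ∑ G, Y t G ≤ μ ^ t * η * Fintype.card (V →ₗ[F] W) := by
    simpa using sum_card_indepTuples_le (F := F) (ι := Fin t) (A := sumTuples B t) hη hμ
      (by simpa using hB t (mem_Icc.1 ht).1)
  obtain ⟨G, -, hG⟩ : ∃ G ∈ (univ : Finset (V →ₗ[F] W)),
      X G / (2 * μ) + ∑ t ∈ Icc 2 ⌊2 * μ⌋₊, Y t G < 1 := by
    refine exists_lt_of_sum_lt ?_
    rw [sum_add_distrib, ← sum_div, sum_comm]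
    calc (∑ G, X G) / (2 * μ) + ∑ t ∈ Icc 2 ⌊2 * μ⌋₊, ∑ G, Y t G
        ≤ μ * Fintype.card (V →ₗ[F] W) / (2 * μ) +
            ∑ t ∈ Icc 2 ⌊2 * μ⌋₊, μ ^ t * η * Fintype.card (V →ₗ[F] W) := by
          gcongr with t ht
          exact hY t ht
      _ = (1 / 2 + ∑ t ∈ Icc 2 ⌊2 * μ⌋₊, μ ^ t * η) * Fintype.card (V →ₗ[F] W) := by
          rw [← sum_mul, add_mul]
          congr 1
          field_simp
      _ < 1 * Fintype.card (V →ₗ[F] W) := by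
          gcongr
          linarith
      _ = ∑ _G : V →ₗ[F] W, 1 := by simp
  have hX0 : 0 ≤ X G / (2 * μ) := by positivity
  have hY0 : ∀ t ∈ Icc 2 ⌊2 * μ⌋₊, 0 ≤ Y t G := fun t _ ↦ Nat.cast_nonneg _
  refine ⟨G, indepSumFree_preimage_of_indepTuples_eq_empty
    (Nat.le_floor (?_ : X G ≤ 2 * μ)) fun t ht ↦ ?_⟩
  · rw [← div_le_one (by positivity)]
    linarith [sum_nonneg hY0]
  · have hlt : (#(indepTuples G (sumTuples B t)) : ℝ) < 1 := by linarith [single_le_sum hY0 ht]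
    exact card_eq_zero.1 (Nat.cast_lt_one.1 hlt)

end RandomLinearMap

section HammingBall

variable (ι F : Type*) [Fintype ι] [Fintype F] [DecidableEq F]

/-- The Hamming ball of the words of weight less than `d`, so that it is `B_q(n, d - 1)` in the
notation of coding theory. -/
noncomputable def hammingBall [Zero F] (d : ℕ) : Finset (ι → F) :=
  {x | hammingNorm x < d}

variable {ι F}

theorem card_filter_support_eq [Zero F] (s : Finset ι) :
    #{x : ι → F | ({i | x i ≠ 0} : Finset ι) = s} = (Fintype.card F - 1) ^ #s := by
  have hpi : ({x : ι → F | ({i | x i ≠ 0} : Finset ι) = s} : Finset (ι → F)) =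
      Fintype.piFinset fun i ↦ if i ∈ s then univ.erase 0 else {0} := by
    ext x
    simp only [Finset.ext_iff, mem_filter_univ, Fintype.mem_piFinset]
    refine forall_congr' fun i ↦ ?_
    by_cases hi : i ∈ s <;> simp [hi]
  simp [hpi, Fintype.card_piFinset, apply_ite card]

theorem card_filter_hammingNorm_eq [Zero F] (i : ℕ) :
    #{x : ι → F | hammingNorm x = i} = (Fintype.card ι).choose i * (Fintype.card F - 1) ^ i := by
  rw [card_eq_sum_card_fiberwise (f := fun x : ι → F ↦ ({j | x j ≠ 0} : Finset ι))
    (t := powersetCard i univ) fun x hx ↦ by simpa [hammingNorm] using hx]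
  rw [sum_const_nat (m := (Fintype.card F - 1) ^ i) fun s hs ↦ ?_, card_powersetCard, card_univ]
  obtain ⟨-, rfl⟩ := mem_powersetCard.1 hs
  rw [filter_filter, ← card_filter_support_eq]
  exact congrArg card (filter_congr fun x _ ↦ ⟨And.right, fun h ↦ ⟨h ▸ rfl, h⟩⟩)

theorem card_hammingBall [Zero F] (d : ℕ) :
    #(hammingBall ι F d) = ∑ i ∈ range d, (Fintype.card ι).choose i * (Fintype.card F - 1) ^ i := by
  rw [card_eq_sum_card_fiberwise (f := hammingNorm) (t := range d) fun x hx ↦ by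
    simpa [hammingBall] using hx]
  refine sum_congr rfl fun i hi ↦ ?_
  rw [← card_filter_hammingNorm_eq, hammingBall, filter_filter]
  exact congrArg card (filter_congr fun x _ ↦
    ⟨And.right, fun h ↦ ⟨h ▸ mem_range.1 hi, h⟩⟩)

theorem cast_card_hammingBall [Zero F] (d : ℕ) :
    (#(hammingBall ι F d) : ℝ) =
      ∑ i ∈ range d, ((Fintype.card ι).choose i : ℝ) * ((Fintype.card F : ℝ) - 1) ^ i := by
  rw [card_hammingBall]
  push_cast [Nat.cast_sub (Fintype.card_pos (α := F))]
  rfl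

theorem zero_mem_hammingBall [Zero F] {d : ℕ} (hd : d ≠ 0) : 0 ∈ hammingBall ι F d := by
  simp [hammingBall, Nat.pos_of_ne_zero hd]

theorem smul_mem_hammingBall [Field F] {c : F} (hc : c ≠ 0) {d : ℕ} {x : ι → F}
    (hx : x ∈ hammingBall ι F d) : c • x ∈ hammingBall ι F d := by
  rw [hammingBall, mem_filter_univ] at hx ⊢
  rwa [hammingNorm_smul fun _ ↦ IsSMulRegular.of_ne_zero hc]

end HammingBall

section SymmetricNoise

variable {F : Type*} [Fintype F]

variable (F) in
/-- The probability that two independent errors of the `q`-ary symmetric channel with error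
probability `δ` sum to zero. -/
noncomputable def cancelProb (δ : ℝ) : ℝ :=
  (1 - δ) ^ 2 + δ * (δ / (Fintype.card F - 1))

theorem cancelProb_nonneg [Nonempty F] (δ : ℝ) : 0 ≤ cancelProb F δ := by
  have hq : 0 ≤ (Fintype.card F : ℝ) - 1 := sub_nonneg.2 (Nat.one_le_cast.2 Fintype.card_pos)
  rw [cancelProb, mul_div_assoc']
  exact add_nonneg (sq_nonneg _) (div_nonneg (mul_self_nonneg δ) hq)

theorem cancelProb_lt {δ : ℝ} (hδ0 : 0 < δ) (hδ : δ / (Fintype.card F - 1) < 1 - δ) :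
    cancelProb F δ < 1 - δ := by
  rw [cancelProb]
  nlinarith

variable [DecidableEq F]

/-- The noise distribution of the `q`-ary symmetric channel with error probability `δ`: a letter is
correct with probability `1 - δ`, and each of the `q - 1` errors is equally likely. -/
noncomputable def symmetricNoise [Zero F] (δ : ℝ) (a : F) : ℝ :=
  if a = 0 then 1 - δ else δ / (Fintype.card F - 1)

theorem symmetricNoise_nonneg [Zero F] {δ : ℝ} (hδ0 : 0 ≤ δ) (hδ1 : δ ≤ 1) (a : F) :
    0 ≤ symmetricNoise δ a := by
  have hq : (1 : ℝ) ≤ Fintype.card F := Nat.one_le_cast.2 Fintype.card_pos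
  rw [symmetricNoise]
  split_ifs
  · linarith
  · exact div_nonneg hδ0 (by linarith)

theorem sum_symmetricNoise_mul [Zero F] (δ : ℝ) (f : F → ℝ) :
    ∑ a, symmetricNoise δ a * f a =
      δ / (Fintype.card F - 1) * ∑ a, f a + (1 - δ - δ / (Fintype.card F - 1)) * f 0 := by
  have hnoise (a : F) : symmetricNoise δ a * f a = δ / (Fintype.card F - 1) * f a +
      if a = 0 then (1 - δ - δ / (Fintype.card F - 1)) * f a else 0 := by
    rw [symmetricNoise]
    split_ifs <;> ring
  simp [hnoise, sum_add_distrib, mul_sum]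

theorem sum_symmetricNoise [Zero F] [Nontrivial F] (δ : ℝ) : ∑ a : F, symmetricNoise δ a = 1 := by
  have hq : (1 : ℝ) < Fintype.card F := Nat.one_lt_cast.2 Fintype.one_lt_card
  have hq' : (Fintype.card F : ℝ) - 1 ≠ 0 := by linarith
  have hsum := sum_symmetricNoise_mul (F := F) δ fun _ ↦ 1
  simp only [mul_one, sum_const, card_univ, nsmul_eq_mul] at hsum
  rw [hsum]
  field_simp
  ring

theorem sum_symmetricNoise_mul_symmetricNoise_sub_le [AddCommGroup F] [Nontrivial F] {δ : ℝ}
    (hδ : δ / (Fintype.card F - 1) ≤ 1 - δ) (c : F) :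
    ∑ a, symmetricNoise δ a * symmetricNoise δ (c - a) ≤
      cancelProb F δ := by
  have hc : symmetricNoise δ c ≤ 1 - δ := by
    rw [symmetricNoise]
    split_ifs
    exacts [le_rfl, hδ]
  have hsum : ∑ a, symmetricNoise δ (c - a) = 1 :=
    ((Equiv.subLeft c).sum_comp (symmetricNoise δ)).trans (sum_symmetricNoise δ)
  rw [sum_symmetricNoise_mul, hsum, sub_zero, cancelProb]
  nlinarith

theorem sum_symmetricNoise_mul_ite_le [AddCommGroup F] [Nontrivial F] {δ : ℝ}
    (hδ : δ / (Fintype.card F - 1) ≤ 1 - δ) {s : ℝ} (hs : s ≤ 1) (v : F) :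
    ∑ y : F × F, symmetricNoise δ y.1 * symmetricNoise δ y.2 *
        (if y.1 + y.2 + v = 0 then 1 else s) ≤
      s + (1 - s) * cancelProb F δ := by
  have hsplit (a b : F) : symmetricNoise δ a * symmetricNoise δ b *
      (if a + b + v = 0 then 1 else s) = s * (symmetricNoise δ a * symmetricNoise δ b) +
        (1 - s) * (symmetricNoise δ a * if b = -v - a then symmetricNoise δ b else 0) := by
    have hb : a + b + v = 0 ↔ b = -v - a := by
      rw [eq_sub_iff_add_eq', ← add_eq_zero_iff_eq_neg]
    simp only [hb]
    split_ifs <;> ring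
  simp only [Fintype.sum_prod_type, hsplit, sum_add_distrib, ← mul_sum, sum_symmetricNoise,
    sum_ite_eq', mem_univ, if_true, mul_one]
  have : 0 ≤ 1 - s := sub_nonneg.2 hs
  gcongr
  exact sum_symmetricNoise_mul_symmetricNoise_sub_le hδ _

end SymmetricNoise

section TiltedCount

variable {ι F : Type*} [Fintype ι]

theorem prod_ite_eq_zero [Zero F] [DecidableEq F] (x : ι → F) (a b : ℝ) :
    ∏ i, (if x i = 0 then a else b) = a ^ (Fintype.card ι - hammingNorm x) * b ^ hammingNorm x := by
  have hcompl : ({i | x i = 0} : Finset ι) = ({i | x i ≠ 0} : Finset ι)ᶜ := by simp [compl_filter]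
  rw [prod_ite, prod_const, prod_const, hcompl, card_compl]
  rfl

theorem pow_mul_pow_le_pow_mul_pow {a b : ℝ} (hb : 0 ≤ b) (hba : b ≤ a) {n w e : ℕ} (hwe : w ≤ e)
    (hen : e ≤ n) : a ^ (n - e) * b ^ e ≤ a ^ (n - w) * b ^ w := by
  have ha : 0 ≤ a := hb.trans hba
  calc a ^ (n - e) * b ^ e = a ^ (n - e) * b ^ (e - w) * b ^ w := by
        rw [mul_assoc, ← pow_add, Nat.sub_add_cancel hwe]
    _ ≤ a ^ (n - e) * a ^ (e - w) * b ^ w := by gcongr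
    _ = a ^ (n - w) * b ^ w := by rw [← pow_add]; congr 2; omega

variable [Fintype F]

theorem sum_prod_eq_prod_sum (f : ι → F → F → ℝ) :
    ∑ y : (ι → F) × (ι → F), ∏ i, f i (y.1 i) (y.2 i) = ∏ i, ∑ a : F × F, f i a.1 a.2 := by
  rw [← (Equiv.arrowProdEquivProdArrow ι (fun _ ↦ F) fun _ ↦ F).sum_comp, prod_univ_sum,
    Fintype.piFinset_univ]
  rfl

variable [DecidableEq F] {δ : ℝ}

theorem le_prod_symmetricNoise [Zero F] (hδ0 : 0 ≤ δ) (hδ : δ / (Fintype.card F - 1) ≤ 1 - δ)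
    {x : ι → F} {e : ℕ} (hx : hammingNorm x ≤ e) (he : e ≤ Fintype.card ι) :
    (1 - δ) ^ (Fintype.card ι - e) * (δ / (Fintype.card F - 1)) ^ e ≤
      ∏ i, symmetricNoise δ (x i) := by
  have hq : (1 : ℝ) ≤ Fintype.card F := Nat.one_le_cast.2 Fintype.card_pos
  simp only [symmetricNoise, prod_ite_eq_zero]
  exact pow_mul_pow_le_pow_mul_pow (div_nonneg hδ0 (by linarith)) hδ hx he

theorem le_prod_tiltedNoise_of_mem_shiftedSumPairs [AddCommGroup F] (hδ0 : 0 ≤ δ)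
    (hδ1 : δ ≤ 1) (hδ : δ / (Fintype.card F - 1) ≤ 1 - δ) {s : ℝ} (hs0 : 0 ≤ s) (hs1 : s ≤ 1)
    {d : ℕ} (hd : d - 1 ≤ Fintype.card ι) {v : ι → F} {y : (ι → F) × (ι → F)}
    (hy : y ∈ shiftedSumPairs (hammingBall ι F d) v) :
    ((1 - δ) ^ (Fintype.card ι - (d - 1)) * (δ / (Fintype.card F - 1)) ^ (d - 1)) ^ 2 *
        s ^ (d - 1) ≤
      ∏ i, symmetricNoise δ (y.1 i) * symmetricNoise δ (y.2 i) *
        if y.1 i + y.2 i + v i = 0 then 1 else s := by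
  simp only [shiftedSumPairs, hammingBall, mem_filter, mem_product, mem_univ, true_and] at hy
  obtain ⟨⟨h1, h2⟩, h3⟩ := hy
  have hnoise (x : ι → F) : 0 ≤ ∏ i, symmetricNoise δ (x i) :=
    prod_nonneg fun i _ ↦ symmetricNoise_nonneg hδ0 hδ1 _
  have hsum : s ^ (d - 1) ≤ ∏ i, if (y.1 + y.2 + v) i = 0 then 1 else s := by
    rw [prod_ite_eq_zero, one_pow, one_mul]
    exact pow_le_pow_of_le_one hs0 hs1 (Nat.le_sub_one_of_lt h3)
  have hy1 := le_prod_symmetricNoise hδ0 hδ (Nat.le_sub_one_of_lt h1) hd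
  have hy2 := le_prod_symmetricNoise hδ0 hδ (Nat.le_sub_one_of_lt h2) hd
  have hq : (1 : ℝ) ≤ Fintype.card F := Nat.one_le_cast.2 Fintype.card_pos
  have hπ : 0 ≤ (1 - δ) ^ (Fintype.card ι - (d - 1)) * (δ / ((Fintype.card F : ℝ) - 1)) ^ (d - 1) :=
    mul_nonneg (pow_nonneg (sub_nonneg.2 hδ1) _) (pow_nonneg (div_nonneg hδ0 (by linarith)) _)
  rw [prod_mul_distrib, prod_mul_distrib, sq]
  exact mul_le_mul (mul_le_mul hy1 hy2 hπ (hnoise _)) hsum (pow_nonneg hs0 _)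
    (mul_nonneg (hnoise _) (hnoise _))

theorem card_shiftedSumPairs_hammingBall_mul_le [AddCommGroup F] [Nontrivial F] (hδ0 : 0 ≤ δ)
    (hδ1 : δ ≤ 1) (hδ : δ / (Fintype.card F - 1) ≤ 1 - δ) {s : ℝ} (hs0 : 0 ≤ s) (hs1 : s ≤ 1)
    {d : ℕ} (hd : d - 1 ≤ Fintype.card ι) (v : ι → F) :
    #(shiftedSumPairs (hammingBall ι F d) v) *
        (((1 - δ) ^ (Fintype.card ι - (d - 1)) * (δ / (Fintype.card F - 1)) ^ (d - 1)) ^ 2 *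
          s ^ (d - 1)) ≤
      (s + (1 - s) * cancelProb F δ) ^ Fintype.card ι := by
  set π := (1 - δ) ^ (Fintype.card ι - (d - 1)) * (δ / ((Fintype.card F : ℝ) - 1)) ^ (d - 1)
  let g (i : ι) (a b : F) : ℝ :=
    symmetricNoise δ a * symmetricNoise δ b * if a + b + v i = 0 then 1 else s
  have hg (i : ι) (a b : F) : 0 ≤ g i a b :=
    mul_nonneg (mul_nonneg (symmetricNoise_nonneg hδ0 hδ1 a) (symmetricNoise_nonneg hδ0 hδ1 b))
      (by split_ifs <;> positivity)
  calc #(shiftedSumPairs (hammingBall ι F d) v) * (π ^ 2 * s ^ (d - 1))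
      = ∑ _y ∈ shiftedSumPairs (hammingBall ι F d) v, π ^ 2 * s ^ (d - 1) := by
        rw [sum_const, nsmul_eq_mul]
    _ ≤ ∑ y ∈ shiftedSumPairs (hammingBall ι F d) v, ∏ i, g i (y.1 i) (y.2 i) :=
        sum_le_sum fun _ hy ↦ le_prod_tiltedNoise_of_mem_shiftedSumPairs hδ0 hδ1 hδ hs0 hs1 hd hy
    _ ≤ ∑ y : (ι → F) × (ι → F), ∏ i, g i (y.1 i) (y.2 i) :=
        sum_le_univ_sum_of_nonneg fun y ↦ prod_nonneg fun i _ ↦ hg i _ _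
    _ = ∏ i, ∑ a : F × F, g i a.1 a.2 := sum_prod_eq_prod_sum g
    _ ≤ ∏ _i : ι, (s + (1 - s) * cancelProb F δ) :=
        prod_le_prod (fun i _ ↦ sum_nonneg fun a _ ↦ hg i _ _)
          fun i _ ↦ sum_symmetricNoise_mul_ite_le hδ hs1 (v i)
    _ = (s + (1 - s) * cancelProb F δ) ^ Fintype.card ι := by
        rw [prod_const, card_univ]

end TiltedCount

section BinomialProb

/-- The probability that a binomial variable with parameters `n` and `δ` equals `i`. -/
noncomputable def binomialProb (δ : ℝ) (n i : ℕ) : ℝ :=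
  n.choose i * δ ^ i * (1 - δ) ^ (n - i)

variable {δ : ℝ} {n : ℕ}

theorem sum_binomialProb (δ : ℝ) (n : ℕ) : ∑ i ∈ range (n + 1), binomialProb δ n i = 1 := by
  have hpow := add_pow δ (1 - δ) n
  rw [add_sub_cancel, one_pow] at hpow
  rw [hpow]
  exact sum_congr rfl fun i _ ↦ by rw [binomialProb]; ring

theorem binomialProb_nonneg (hδ0 : 0 ≤ δ) (hδ1 : δ ≤ 1) (i : ℕ) : 0 ≤ binomialProb δ n i := by
  have : 0 ≤ 1 - δ := sub_nonneg.2 hδ1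
  rw [binomialProb]
  positivity

theorem binomialProb_succ_mul {i : ℕ} (hi : i ≤ n) :
    binomialProb δ n (i + 1) * ((i + 1) * (1 - δ)) = binomialProb δ n i * ((n - i) * δ) := by
  obtain rfl | hlt := hi.eq_or_lt
  · simp [binomialProb]
  have hchoose : (n.choose (i + 1) : ℝ) * (i + 1) = n.choose i * (n - i) := by
    rw [← Nat.cast_sub hi]
    exact_mod_cast Nat.choose_succ_right_eq n i
  have hpow : (1 - δ) ^ (n - i) = (1 - δ) ^ (n - (i + 1)) * (1 - δ) := by
    rw [← pow_succ]
    congr 1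
    omega
  rw [binomialProb, binomialProb, hpow]
  linear_combination δ ^ (i + 1) * (1 - δ) ^ (n - (i + 1)) * (1 - δ) * hchoose

theorem binomialProb_succ_le (hδ0 : 0 ≤ δ) (hδ1 : δ < 1) (i : ℕ) :
    binomialProb δ n (i + 1) ≤ (1 + n * (δ / (1 - δ))) * binomialProb δ n i := by
  have hδ1' : 0 < 1 - δ := sub_pos.2 hδ1
  have hb := binomialProb_nonneg (n := n) hδ0 hδ1.le
  obtain hi | hi := lt_or_ge n i
  · have hzero : binomialProb δ n (i + 1) = 0 := by
      simp [binomialProb, Nat.choose_eq_zero_of_lt (hi.trans (Nat.lt_succ_self i))]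
    rw [hzero]
    exact mul_nonneg (by positivity) (hb i)
  refine le_of_mul_le_mul_right ?_ hδ1'
  calc binomialProb δ n (i + 1) * (1 - δ)
      ≤ binomialProb δ n (i + 1) * ((i + 1) * (1 - δ)) := by
        gcongr
        · exact hb _
        · exact le_mul_of_one_le_left hδ1'.le (by linarith [Nat.cast_nonneg (α := ℝ) i])
    _ = binomialProb δ n i * ((n - i) * δ) := binomialProb_succ_mul hi
    _ ≤ binomialProb δ n i * (1 - δ + n * δ) := by
        gcongr
        · exact hb i
        · nlinarith [mul_nonneg (Nat.cast_nonneg (α := ℝ) i) hδ0]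
    _ = (1 + n * (δ / (1 - δ))) * binomialProb δ n i * (1 - δ) := by field_simp

theorem exists_forall_binomialProb_le (hδ0 : 0 ≤ δ) (hδ1 : δ ≤ 1) (n : ℕ) :
    ∃ m ≤ n, ∀ i, binomialProb δ n i ≤ binomialProb δ n m := by
  obtain ⟨m, hm, hmax⟩ := (range (n + 1)).exists_max_image (binomialProb δ n) nonempty_range_add_one
  refine ⟨m, Nat.lt_succ_iff.1 (mem_range.1 hm), fun i ↦ ?_⟩
  obtain hi | hi := lt_or_ge i (n + 1)
  · exact hmax i (mem_range.2 hi)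
  · have hzero : binomialProb δ n i = 0 := by simp [binomialProb, Nat.choose_eq_zero_of_lt hi]
    exact hzero ▸ binomialProb_nonneg hδ0 hδ1 m

theorem exists_one_le_mul_binomialProb (hδ0 : 0 ≤ δ) (hδ1 : δ ≤ 1) (n : ℕ) :
    ∃ m : ℕ, m ≤ δ * (n + 1) ∧ δ * (n + 1) ≤ m + 1 ∧ 1 ≤ (n + 1) * binomialProb δ n m := by
  obtain ⟨m, hmn, hmax⟩ := exists_forall_binomialProb_le hδ0 hδ1 n
  have hone : 1 ≤ (n + 1) * binomialProb δ n m := by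
    simpa [sum_binomialProb] using sum_le_card_nsmul (range (n + 1)) _ _ fun i _ ↦ hmax i
  have hpos : 0 < binomialProb δ n m := pos_of_mul_pos_right (one_pos.trans_le hone) (by positivity)
  refine ⟨m, ?_, ?_, hone⟩
  · obtain _ | i := m
    · push_cast
      positivity
    have hin : 0 ≤ (n : ℝ) - i := sub_nonneg.2 (Nat.cast_le.2 (by omega))
    have hratio : (i + 1) * (1 - δ) ≤ (n - i) * δ := by
      refine le_of_mul_le_mul_left ?_ hpos
      rw [binomialProb_succ_mul (by omega)]
      exact mul_le_mul_of_nonneg_right (hmax i) (mul_nonneg hin hδ0)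
    push_cast
    linarith
  · have hratio : (n - m) * δ ≤ (m + 1) * (1 - δ) := by
      refine le_of_mul_le_mul_left ?_ hpos
      rw [← binomialProb_succ_mul hmn]
      exact mul_le_mul_of_nonneg_right (hmax (m + 1))
        (mul_nonneg (by positivity) (sub_nonneg.2 hδ1))
    linarith

theorem one_le_mul_binomialProb_floor_sub_one (hδ0 : 0 ≤ δ) (hδ1 : δ < 1) (n : ℕ) :
    1 ≤ (n + 1) * (1 + n * (δ / (1 - δ))) ^ 2 * binomialProb δ n (⌊δ * n⌋₊ - 1) := by
  obtain ⟨m, hm, hm', hone⟩ := exists_one_le_mul_binomialProb hδ0 hδ1.le n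
  set e := ⌊δ * n⌋₊ - 1
  set r := 1 + n * (δ / (1 - δ))
  have hr : 1 ≤ r := le_add_of_nonneg_right
    (mul_nonneg n.cast_nonneg (div_nonneg hδ0 (sub_nonneg.2 hδ1.le)))
  have hfloor : (⌊δ * n⌋₊ : ℝ) ≤ δ * n := Nat.floor_le (by positivity)
  have hfloor' : δ * n < ⌊δ * n⌋₊ + 1 := Nat.lt_floor_add_one _
  have hem : ⌊δ * n⌋₊ < m + 1 + 1 := by
    exact_mod_cast (by linarith : (⌊δ * n⌋₊ : ℝ) < m + 1 + 1)
  have hme : m < ⌊δ * n⌋₊ + 1 + 1 := by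
    exact_mod_cast (by linarith : (m : ℝ) < ⌊δ * n⌋₊ + 1 + 1)
  have hstep (i : ℕ) : binomialProb δ n (i + 1) ≤ r * binomialProb δ n i :=
    binomialProb_succ_le hδ0 hδ1 i
  have he := binomialProb_nonneg (n := n) hδ0 hδ1.le e
  have hmode : binomialProb δ n m ≤ r ^ 2 * binomialProb δ n e := by
    obtain h | h | h : m = e ∨ m = e + 1 ∨ m = e + 2 := by omega
    · rw [h]
      exact le_mul_of_one_le_left he (one_le_pow₀ hr)
    · exact h ▸ (hstep e).trans (by gcongr; exact le_self_pow₀ hr two_ne_zero)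
    · calc binomialProb δ n m = binomialProb δ n (e + 1 + 1) := by rw [h]
        _ ≤ r * binomialProb δ n (e + 1) := hstep _
        _ ≤ r * (r * binomialProb δ n e) := by gcongr; exact hstep e
        _ = r ^ 2 * binomialProb δ n e := by ring
  calc 1 ≤ (n + 1) * binomialProb δ n m := hone
    _ ≤ (n + 1) * (r ^ 2 * binomialProb δ n e) := by gcongr
    _ = (n + 1) * r ^ 2 * binomialProb δ n e := by ring

end BinomialProb

section ExponentialRarity

variable {F : Type*} [Fintype F] [DecidableEq F] {δ : ℝ}

theorem binomialProb_le_card_hammingBall_mul [Zero F] [Nontrivial F] (hδ0 : 0 ≤ δ) (hδ1 : δ ≤ 1)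
    {n d : ℕ} (hd : d ≠ 0) :
    binomialProb δ n (d - 1) ≤ #(hammingBall (Fin n) F d) *
      ((1 - δ) ^ (n - (d - 1)) * (δ / (Fintype.card F - 1)) ^ (d - 1)) := by
  have hq : 0 < (Fintype.card F : ℝ) - 1 := sub_pos.2 (Nat.one_lt_cast.2 Fintype.one_lt_card)
  have : 0 ≤ 1 - δ := sub_nonneg.2 hδ1
  rw [cast_card_hammingBall, Fintype.card_fin]
  calc binomialProb δ n (d - 1)
      = n.choose (d - 1) * ((Fintype.card F : ℝ) - 1) ^ (d - 1) *
          ((1 - δ) ^ (n - (d - 1)) * (δ / (Fintype.card F - 1)) ^ (d - 1)) := by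
        rw [binomialProb, div_pow]
        field_simp
    _ ≤ _ := by
        gcongr
        exact single_le_sum (f := fun i ↦ (n.choose i : ℝ) * ((Fintype.card F : ℝ) - 1) ^ i)
          (fun i _ ↦ by positivity) (mem_range.2 (by omega))

theorem exists_tilt_lt_rpow {P : ℝ} (hδ0 : 0 < δ) (hP : P < 1 - δ) :
    ∃ s : ℝ, 0 < s ∧ s < 1 ∧ s + (1 - s) * P < s ^ δ := by
  obtain ⟨s, hs, hs1⟩ : ∃ s : ℝ, δ / (1 - P) < s ∧ s < 1 :=
    exists_between (by rw [div_lt_one (by linarith)]; linarith)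
  have hs0 : 0 < s := (div_pos hδ0 (by linarith)).trans hs
  rw [div_lt_iff₀ (by linarith)] at hs
  refine ⟨s, hs0, hs1, ?_⟩
  calc s + (1 - s) * P < 1 + δ * (1 - s⁻¹) := by
        rw [← sub_pos]
        have hfactor : 1 + δ * (1 - s⁻¹) - (s + (1 - s) * P) = (1 - s) * (s * (1 - P) - δ) / s := by
          field_simp
          ring
        rw [hfactor]
        exact div_pos (mul_pos (sub_pos.2 hs1) (sub_pos.2 hs)) hs0
    _ ≤ 1 + δ * Real.log s := by gcongr; exact Real.one_sub_inv_le_log_of_pos hs0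
    _ ≤ Real.exp (Real.log s * δ) := by
        rw [add_comm, mul_comm]
        exact Real.add_one_le_exp _
    _ = s ^ δ := (Real.rpow_def_of_pos hs0 δ).symm

theorem pow_le_div_rpow_pow_mul_pow {κ s : ℝ} (hκ : 0 ≤ κ) (hs0 : 0 < s) (hs1 : s ≤ 1) {n e : ℕ}
    (he : e ≤ δ * n) : κ ^ n ≤ (κ / s ^ δ) ^ n * s ^ e := by
  have hsδ : 0 < s ^ δ := Real.rpow_pos_of_pos hs0 δ
  calc κ ^ n = (κ / s ^ δ) ^ n * (s ^ δ) ^ n := by rw [← mul_pow, div_mul_cancel₀ _ hsδ.ne']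
    _ ≤ (κ / s ^ δ) ^ n * s ^ e := by
        gcongr
        rw [← Real.rpow_mul_natCast hs0.le, ← Real.rpow_natCast s e]
        exact Real.rpow_le_rpow_of_exponent_ge hs0 hs1 he

theorem card_shiftedSumPairs_hammingBall_le [AddCommGroup F] [Nontrivial F] (hδ0 : 0 ≤ δ)
    (hδ1 : δ < 1) (hδ : δ / (Fintype.card F - 1) ≤ 1 - δ) {s : ℝ} (hs0 : 0 < s) (hs1 : s ≤ 1)
    {n : ℕ} (hn : ⌊δ * n⌋₊ ≠ 0) (v : Fin n → F) :
    (#(shiftedSumPairs (hammingBall (Fin n) F ⌊δ * n⌋₊) v) : ℝ) ≤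
      ((n + 1) * (1 + n * (δ / (1 - δ))) ^ 2) ^ 2 * ((s + (1 - s) * cancelProb F δ) / s ^ δ) ^ n *
        (#(hammingBall (Fin n) F ⌊δ * n⌋₊) : ℝ) ^ 2 := by
  have hfloor : (⌊δ * n⌋₊ : ℝ) ≤ δ * n := Nat.floor_le (by positivity)
  have he : ((⌊δ * n⌋₊ - 1 : ℕ) : ℝ) ≤ δ * n := (Nat.cast_le.2 (Nat.sub_le _ _)).trans hfloor
  have hen : ⌊δ * n⌋₊ - 1 ≤ n := (Nat.cast_le (α := ℝ)).1
    (he.trans (mul_le_of_le_one_left n.cast_nonneg hδ1.le))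
  have hcount := card_shiftedSumPairs_hammingBall_mul_le hδ0 hδ1.le hδ hs0.le hs1
    (hen.trans_eq (Fintype.card_fin n).symm) v
  have hmode := (one_le_mul_binomialProb_floor_sub_one hδ0 hδ1 n).trans <|
    mul_le_mul_of_nonneg_left (binomialProb_le_card_hammingBall_mul (F := F) hδ0 hδ1.le hn)
      (by have := div_nonneg hδ0 (sub_nonneg.2 hδ1.le); positivity)
  rw [Fintype.card_fin] at hcount
  set π := (1 - δ) ^ (n - (⌊δ * n⌋₊ - 1)) *
    (δ / ((Fintype.card F : ℝ) - 1)) ^ (⌊δ * n⌋₊ - 1)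
  set B := (#(hammingBall (Fin n) F ⌊δ * n⌋₊) : ℝ)
  set D := (#(shiftedSumPairs (hammingBall (Fin n) F ⌊δ * n⌋₊) v) : ℝ)
  set Q := (n + 1) * (1 + n * (δ / (1 - δ))) ^ 2
  set ρ := (s + (1 - s) * cancelProb F δ) / s ^ δ
  have hD : D * π ^ 2 ≤ ρ ^ n := by
    refine le_of_mul_le_mul_right ?_ (pow_pos hs0 (⌊δ * n⌋₊ - 1))
    rw [mul_assoc]
    exact hcount.trans (pow_le_div_rpow_pow_mul_pow
      (add_nonneg hs0.le (mul_nonneg (sub_nonneg.2 hs1) (cancelProb_nonneg δ))) hs0 hs1 he)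
  calc D ≤ D * (Q * (B * π)) ^ 2 := le_mul_of_one_le_right (Nat.cast_nonneg _) (one_le_pow₀ hmode)
    _ = Q ^ 2 * (D * π ^ 2) * B ^ 2 := by ring
    _ ≤ Q ^ 2 * ρ ^ n * B ^ 2 := by gcongr

theorem tendsto_poly_mul_pow {ρ : ℝ} (hρ0 : 0 ≤ ρ) (hρ1 : ρ < 1) {x : ℝ} (hx : 0 ≤ x) :
    Tendsto (fun n : ℕ ↦ ((n + 1) * (1 + n * x) ^ 2) ^ 2 * ρ ^ n) atTop (𝓝 0) := by
  have hlim := (tendsto_pow_const_mul_const_pow_of_abs_lt_one 6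
    (by rwa [abs_of_nonneg hρ0] : |ρ| < 1)).const_mul ((2 * (1 + x) ^ 2) ^ 2)
  rw [mul_zero] at hlim
  refine squeeze_zero' (.of_forall fun n ↦ by positivity) ?_ hlim
  filter_upwards [eventually_ge_atTop 1] with n hn
  have hn' : (1 : ℝ) ≤ n := Nat.one_le_cast.2 hn
  calc ((n + 1) * (1 + n * x) ^ 2) ^ 2 * ρ ^ n
      ≤ ((n + n) * (n + n * x) ^ 2) ^ 2 * ρ ^ n := by gcongr
    _ = (2 * (1 + x) ^ 2) ^ 2 * (n ^ 6 * ρ ^ n) := by ring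

theorem eventually_floor_mul_natCast_ne_zero (hδ : 0 < δ) : ∀ᶠ n : ℕ in atTop, ⌊δ * n⌋₊ ≠ 0 :=
  ((tendsto_nat_floor_mul_atTop δ hδ).comp tendsto_natCast_atTop_atTop).eventually_ne_atTop 0

theorem exists_eventually_card_shiftedSumPairs_hammingBall_le [AddCommGroup F] [Nontrivial F]
    (hδ0 : 0 < δ) (hδ1 : δ < 1 - 1 / (Fintype.card F : ℝ)) :
    ∃ ρ : ℝ, 0 < ρ ∧ ρ < 1 ∧ ∀ᶠ n : ℕ in atTop, ∀ v : Fin n → F,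
      (#(shiftedSumPairs (hammingBall (Fin n) F ⌊δ * n⌋₊) v) : ℝ) ≤
        ρ ^ n * (#(hammingBall (Fin n) F ⌊δ * n⌋₊) : ℝ) ^ 2 := by
  have hq : (1 : ℝ) < Fintype.card F := Nat.one_lt_cast.2 Fintype.one_lt_card
  have hδ1' : δ < 1 := hδ1.trans (sub_lt_self _ (by positivity))
  have hδ : δ / (Fintype.card F - 1) < 1 - δ := by
    rw [lt_sub_comm, div_lt_iff₀ (by linarith)] at hδ1
    rw [div_lt_iff₀ (by linarith)]
    linarith
  obtain ⟨s, hs0, hs1, hs⟩ := exists_tilt_lt_rpow hδ0 (cancelProb_lt hδ0 hδ)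
  have hκ : 0 < s + (1 - s) * cancelProb F δ :=
    add_pos_of_pos_of_nonneg hs0 (mul_nonneg (sub_nonneg.2 hs1.le) (cancelProb_nonneg δ))
  have hsδ : 0 < s ^ δ := Real.rpow_pos_of_pos hs0 δ
  set ρ := (s + (1 - s) * cancelProb F δ) / s ^ δ
  have hρ0 : 0 < ρ := div_pos hκ hsδ
  have hρ1 : ρ < 1 := (div_lt_one hsδ).2 hs
  have hsqrt : √ρ < 1 := by simpa using Real.sqrt_lt_sqrt hρ0.le hρ1
  have hpoly := (tendsto_poly_mul_pow (Real.sqrt_nonneg ρ) hsqrt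
    (div_nonneg hδ0.le (sub_nonneg.2 hδ1'.le))).eventually_le_const zero_lt_one
  refine ⟨√ρ, Real.sqrt_pos.2 hρ0, hsqrt, ?_⟩
  filter_upwards [hpoly, eventually_floor_mul_natCast_ne_zero hδ0] with n hn hfloor v
  refine (card_shiftedSumPairs_hammingBall_le hδ0.le hδ1' hδ.le hs0 hs1.le hfloor v).trans ?_
  refine mul_le_mul_of_nonneg_right ?_ (sq_nonneg _)
  calc ((n + 1) * (1 + n * (δ / (1 - δ))) ^ 2) ^ 2 * ρ ^ n
      = ((n + 1) * (1 + n * (δ / (1 - δ))) ^ 2) ^ 2 * √ρ ^ n * √ρ ^ n := by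
        rw [mul_assoc, ← mul_pow, Real.mul_self_sqrt hρ0.le]
    _ ≤ √ρ ^ n := mul_le_of_le_one_left (by positivity) hn

end ExponentialRarity

section Asymptotics

open Asymptotics

theorem pow_mul_pow_le_exp {x ρ c : ℝ} (hx : 1 ≤ x) (hρ : 0 < ρ) {m n : ℕ}
    (hm : m * Real.log x ≤ c * n) : x ^ m * ρ ^ n ≤ (Real.exp c * ρ) ^ n := by
  calc x ^ m * ρ ^ n = Real.exp (m * Real.log x) * ρ ^ n := by
        rw [Real.exp_nat_mul, Real.exp_log (by linarith)]
    _ ≤ Real.exp (n * c) * ρ ^ n := by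
        refine mul_le_mul_of_nonneg_right (Real.exp_le_exp.2 ?_) (by positivity)
        linarith
    _ = (Real.exp c * ρ) ^ n := by rw [Real.exp_nat_mul, mul_pow]

theorem eventually_sum_pow_mul_pow_lt {μ : ℕ → ℝ} (hμ1 : ∀ n, 1 ≤ μ n)
    (hμ : (fun n ↦ μ n * Real.log n) =o[atTop] fun n ↦ (n : ℝ)) {ρ : ℝ} (hρ0 : 0 < ρ)
    (hρ1 : ρ < 1) {ε : ℝ} (hε : 0 < ε) :
    ∀ᶠ n in atTop, ∑ t ∈ Icc 2 ⌊2 * μ n⌋₊, μ n ^ t * ρ ^ n < ε := by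
  have hlog : 0 < -Real.log ρ := neg_pos.2 (Real.log_neg hρ0 hρ1)
  have hsqrt : Real.exp (-Real.log ρ / 2) * ρ = √ρ := by
    rw [Real.sqrt_eq_rpow, Real.rpow_def_of_pos hρ0]
    nth_rw 2 [← Real.exp_log hρ0]
    rw [← Real.exp_add]
    ring_nf
  have hsqrt1 : |√ρ| < 1 := by
    rw [abs_of_nonneg (Real.sqrt_nonneg ρ)]
    simpa only [Real.sqrt_one] using Real.sqrt_lt_sqrt hρ0.le hρ1
  have hlogn := (Real.tendsto_log_atTop.comp tendsto_natCast_atTop_atTop).eventually_ge_atTop 1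
  have hlim := (tendsto_pow_const_mul_const_pow_of_abs_lt_one 1 hsqrt1).const_mul 2
  rw [mul_zero] at hlim
  filter_upwards [hlim.eventually_lt_const hε, hμ.bound (show 0 < -Real.log ρ / 4 by linarith),
    hμ.bound one_pos, hlogn, eventually_ge_atTop 1] with n hn hsmall hle hlogn hn1
  have hn1' : (1 : ℝ) ≤ n := Nat.one_le_cast.2 hn1
  replace hlogn : 1 ≤ Real.log n := hlogn
  have hμ0 : 0 ≤ μ n := zero_le_one.trans (hμ1 n)
  have hμlog : 0 ≤ μ n * Real.log n := mul_nonneg hμ0 (by linarith)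
  rw [Real.norm_of_nonneg hμlog, Real.norm_of_nonneg n.cast_nonneg] at hsmall hle
  have hμn : μ n ≤ n := (le_mul_of_one_le_right hμ0 hlogn).trans (by linarith)
  set M := ⌊2 * μ n⌋₊
  have hM : (M : ℝ) ≤ 2 * μ n := Nat.floor_le (by linarith)
  have hMlog : M * Real.log n ≤ -Real.log ρ / 2 * n := by
    calc M * Real.log n ≤ 2 * μ n * Real.log n := by gcongr
      _ ≤ -Real.log ρ / 2 * n := by linarith
  calc ∑ t ∈ Icc 2 M, μ n ^ t * ρ ^ n
      ≤ ∑ _t ∈ Icc 2 M, √ρ ^ n := by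
        refine sum_le_sum fun t ht ↦ ?_
        rw [← hsqrt]
        refine le_trans ?_ (pow_mul_pow_le_exp hn1' hρ0 hMlog)
        gcongr
        exact (pow_le_pow_right₀ (hμ1 n) (mem_Icc.1 ht).2).trans (pow_le_pow_left₀ hμ0 hμn M)
    _ = ↑(M - 1) * √ρ ^ n := by rw [sum_const, Nat.card_Icc, nsmul_eq_mul]; rfl
    _ ≤ 2 * n * √ρ ^ n := by
        gcongr
        exact (Nat.cast_le.2 (Nat.sub_le M 1)).trans (by linarith)
    _ = 2 * (n ^ 1 * √ρ ^ n) := by ring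
    _ < ε := hn

theorem isLittleO_affine_mul_log {g : ℕ → ℝ}
    (hg : (fun n ↦ g n * Real.log n) =o[atTop] fun n ↦ (n : ℝ)) (a b : ℝ) :
    (fun n ↦ (a + b * |g n|) * Real.log n) =o[atTop] fun n ↦ (n : ℝ) := by
  have hlog : (fun n : ℕ ↦ Real.log n) =o[atTop] fun n ↦ (n : ℝ) :=
    Real.isLittleO_log_id_atTop.comp_tendsto tendsto_natCast_atTop_atTop
  refine ((hlog.const_mul_left a).add (hg.norm_left.const_mul_left b)).congr_left fun n ↦ ?_
  rw [norm_mul, Real.norm_eq_abs, Real.norm_of_nonneg (Real.log_natCast_nonneg n)]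
  ring

theorem isLittleO_sqrt_mul_log :
    (fun n : ℕ ↦ √n * Real.log n) =o[atTop] fun n ↦ (n : ℝ) := by
  have hlog := (isLittleO_log_rpow_atTop (show (0 : ℝ) < 1 / 2 by norm_num)).comp_tendsto
    tendsto_natCast_atTop_atTop
  refine ((isBigO_refl (fun n : ℕ ↦ √n) atTop).mul_isLittleO hlog).congr_right fun n ↦ ?_
  change √(n : ℝ) * (n : ℝ) ^ ((1 : ℝ) / 2) = n
  rw [← Real.sqrt_eq_rpow, Real.mul_self_sqrt n.cast_nonneg]

end Asymptotics

section GilbertVarshamov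

variable {F : Type*} [Field F] [Fintype F] [DecidableEq F]

theorem exists_submodule_le_hammingNorm {n k d : ℕ} (hd : d ≠ 0) {μ η : ℝ} (hμ0 : 0 < μ)
    (hη : 0 ≤ η)
    (hμ : (Fintype.card F : ℝ) ^ (k + 1) * #(hammingBall (Fin n) F d) ≤
      μ * (Fintype.card F : ℝ) ^ n)
    (hpairs : ∀ v : Fin n → F, (#(shiftedSumPairs (hammingBall (Fin n) F d) v) : ℝ) ≤
      η * (#(hammingBall (Fin n) F d) : ℝ) ^ 2)
    (hsum : ∑ t ∈ Icc 2 ⌊2 * μ⌋₊, μ ^ t * η < 1 / 2) :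
    ∃ C : Submodule F (Fin n → F), Module.finrank F C = k ∧
      ∀ x ∈ C, x ≠ 0 → d ≤ hammingNorm x := by
  have htuples (t : ℕ) (ht : 2 ≤ t) : (#(sumTuples (hammingBall (Fin n) F d) t) : ℝ) ≤
      η * (#(hammingBall (Fin n) F d) : ℝ) ^ t := by
    obtain ⟨s, rfl⟩ := Nat.exists_eq_add_of_le' ht
    refine (card_sumTuples_le hpairs s).trans_eq ?_
    ring
  obtain ⟨G, hG⟩ := exists_linearMap_indepSumFree_preimage (F := F) (V := Fin (k + 1) → F) hμ0 hη
    (by simpa using hμ) htuples hsum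
  obtain ⟨C, hC, hCball⟩ := exists_submodule_finrank_eq_of_indepSumFree_preimage
    (Module.finrank_fin_fun F) (zero_mem_hammingBall hd)
    (fun c hc w hw ↦ smul_mem_hammingBall hc hw) hG
  exact ⟨C, hC, fun x hx hx0 ↦ by simpa [hammingBall] using hCball x hx hx0⟩

theorem pow_succ_mul_le_of_div_lt {q B g : ℝ} (hq : 1 < q) {n k : ℕ} (hB0 : 0 < B)
    (hB : B ≤ q ^ n) (hk : (q ^ k - 1) / (q - 1) < g * q ^ n / B) :
    q ^ (k + 1) * B ≤ (q + q ^ 2 * |g|) * q ^ n := by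
  have hq' : 0 < q - 1 := sub_pos.2 hq
  have hqn : 0 < q ^ n := by positivity
  rw [div_lt_div_iff₀ hq' hB0] at hk
  have hkB : (q ^ k - 1) * B ≤ |g| * q ^ n * q :=
    hk.le.trans (mul_le_mul (mul_le_mul_of_nonneg_right (le_abs_self g) hqn.le) (by linarith)
      hq'.le (by positivity))
  calc q ^ (k + 1) * B = q * B + q * ((q ^ k - 1) * B) := by ring
    _ ≤ q * q ^ n + q * (|g| * q ^ n * q) :=
        add_le_add (mul_le_mul_of_nonneg_left hB (by linarith))
          (mul_le_mul_of_nonneg_left hkB (by linarith))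
    _ = (q + q ^ 2 * |g|) * q ^ n := by ring

theorem gv_bound_sqrt_improvement_general {δ : ℝ} (hδ0 : 0 < δ)
    (hδ1 : δ < 1 - 1 / (Fintype.card F : ℝ)) {g : ℕ → ℝ}
    (hg : (fun n ↦ g n * Real.log n) =o[atTop] fun n ↦ (n : ℝ)) :
    ∀ᶠ n : ℕ in atTop, ∀ k : ℕ,
      ((Fintype.card F : ℝ) ^ k - 1) / ((Fintype.card F : ℝ) - 1) <
        g n * (Fintype.card F : ℝ) ^ n /
          (∑ i ∈ range ⌊δ * (n : ℝ)⌋₊, (n.choose i : ℝ) * ((Fintype.card F : ℝ) - 1) ^ i) →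
      ∃ C : Submodule F (Fin n → F), Module.finrank F C = k ∧
        ∀ x ∈ C, x ≠ 0 → ⌊δ * (n : ℝ)⌋₊ ≤ hammingNorm x := by
  have hq : (1 : ℝ) < Fintype.card F := Nat.one_lt_cast.2 Fintype.one_lt_card
  obtain ⟨ρ, hρ0, hρ1, hpairs⟩ :=
    exists_eventually_card_shiftedSumPairs_hammingBall_le hδ0 hδ1
  let μ (n : ℕ) : ℝ := Fintype.card F + (Fintype.card F : ℝ) ^ 2 * |g n|
  have hμ1 (n : ℕ) : 1 ≤ μ n := hq.le.trans (le_add_of_nonneg_right (by positivity))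
  filter_upwards [hpairs, eventually_floor_mul_natCast_ne_zero hδ0,
    eventually_sum_pow_mul_pow_lt hμ1 (isLittleO_affine_mul_log hg _ _) hρ0 hρ1 one_half_pos]
    with n hpairs hd hsum k hk
  have hball := cast_card_hammingBall (ι := Fin n) (F := F) ⌊δ * n⌋₊
  rw [Fintype.card_fin] at hball
  rw [← hball] at hk
  have hpos : 0 < (#(hammingBall (Fin n) F ⌊δ * n⌋₊) : ℝ) :=
    Nat.cast_pos.2 (card_pos.2 ⟨0, zero_mem_hammingBall hd⟩)
  have hle := card_le_univ (hammingBall (Fin n) F ⌊δ * n⌋₊)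
  rw [Fintype.card_fun, Fintype.card_fin] at hle
  exact exists_submodule_le_hammingNorm hd (one_pos.trans_le (hμ1 n)) (by positivity)
    (pow_succ_mul_le_of_div_lt hq hpos (mod_cast hle) hk) hpairs hsum

end GilbertVarshamov

/-- For a prime power `q` (realized as the cardinality of a finite field `F`)
and a constant `δ ∈ (0, 1 - 1/q)`, there is a constant `c_δ > 0` such that for all sufficiently
large `n`, with `d = ⌊δn⌋`: if `k > 0` satisfies
`(q^k - 1)/(q - 1) < c_δ · √n · q^n / ∑_{i=0}^{d-1} C(n,i)(q-1)^i`, then there is a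
`k`-dimensional linear subspace of `F^n` all of whose nonzero elements have Hamming weight at
least `d`. -/
theorem gv_bound_sqrt_improvement
    (q : ℕ) (F : Type) [Field F] [Fintype F] [DecidableEq F] (hF : Fintype.card F = q)
    (δ : ℝ) (hδ0 : 0 < δ) (hδ1 : δ < 1 - 1 / (q : ℝ)) :
    ∃ c : ℝ, 0 < c ∧ ∃ N : ℕ, ∀ n : ℕ, N ≤ n → ∀ k : ℕ, 0 < k →
      ((q : ℝ) ^ k - 1) / ((q : ℝ) - 1) <
        c * Real.sqrt n * (q : ℝ) ^ n /
          (∑ i ∈ Finset.range ⌊δ * (n : ℝ)⌋₊, (n.choose i : ℝ) * ((q : ℝ) - 1) ^ i) →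
      ∃ C : Submodule F (Fin n → F), Module.finrank F C = k ∧
        ∀ x ∈ C, x ≠ 0 → ⌊δ * (n : ℝ)⌋₊ ≤ hammingNorm x := by
  subst hF
  obtain ⟨N, hN⟩ := eventually_atTop.1
    (gv_bound_sqrt_improvement_general hδ0 hδ1 isLittleO_sqrt_mul_log)
  refine ⟨1, one_pos, N, fun n hn k _ hk ↦ hN n hn k ?_⟩
  rwa [one_mul] at hk
end

section
/- Let q be a prime power and let 0 < τ ≤ δ < 1 − 1/q² be constants. Then there exist a constant c > 0 and an integer N such that for all n ≥ N the following holds with d − 1 = ⌊δn⌋: for every nonzero vector u ∈ B_q^S(2n, d−1) with wt_S(u) ≥ τn, the set B_q^S(2n, d−1) ∩ {v ∈ 𝔽_q^{2n} : ⟨u, v⟩_S = 0} has cardinality at least ((1 − q^{−cn})/q) · Vol_q^S(2n, d−1) and at most ((1 + q^{−cn})/q) · Vol_q^S(2n, d−1). -/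
open Finset
open scoped Classical

/-- Symplectic weight of a vector in `F^{2n}`, written as `Fin n → F × F`. -/
noncomputable def sympWt {F : Type} [Zero F] [DecidableEq F] {n : ℕ} (u : Fin n → F × F) : ℕ :=
  hammingNorm u

/-- The symplectic inner product on `F^{2n}`: `⟨(a|b),(a'|b')⟩_S = ⟨a,b'⟩ - ⟨b,a'⟩`. -/
def sympInner {F : Type} [Field F] {n : ℕ} (u v : Fin n → F × F) : F :=
  ∑ i, ((u i).1 * (v i).2 - (u i).2 * (v i).1)

/-- The symplectic ball `B_q^S(2n, r)` of radius `r`. -/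
noncomputable def sympBall (F : Type) [Fintype F] [Zero F] [DecidableEq F] (n r : ℕ) :
    Finset (Fin n → F × F) :=
  Finset.univ.filter fun x => sympWt x ≤ r

/-- `Vol_q^S(2n, r) = ∑_{i=0}^{r} C(n,i)(q²-1)^i`, the volume of the symplectic ball. -/
def volS (q n r : ℕ) : ℕ :=
  ∑ i ∈ Finset.range (r + 1), n.choose i * (q ^ 2 - 1) ^ i

/-!
By orthogonality of characters, `q * #{v : ⟨u, v⟩_S = a}` differs from the volume of the ball by at
most the sum over `l ≠ 0` of `|∑ v, ψ (l * ⟨u, v⟩_S)|`. Summed over the `v` with a given support,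
the character factors over the support, a coordinate contributing `-1` where `u` is nonzero and
`q² - 1` elsewhere. Weighting each `v` by `z ^ (wt v - r) ≥ 1` with `z ≤ 1` (Rankin's trick) bounds
the character sum by `z ^ (-r) * (1 + z) ^ wt u * (1 + (q² - 1) * z) ^ (n - wt u)`. At the saddle
point `z` of the ball, `(1 + (q² - 1) * z) ^ n ≤ (n + 1) * z ^ r * Vol`, so the relative error is at
most `q * (n + 1) * ((1 + z) / (1 + (q² - 1) * z)) ^ wt u`, which is exponentially small as `z` is
bounded away from `0`.
-/

section BinomialTail

lemma choose_succ_mul_pow_succ_mul (n k : ℕ) (t : ℝ) :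
    n.choose (k + 1) * t ^ (k + 1) * (k + 1) = n.choose k * t ^ k * ((n - k) * t) := by
  have hchoose : (n.choose (k + 1) : ℝ) * (k + 1) = n.choose k * (n - k) := by
    rcases le_or_gt k n with hk | hk
    · rw [← Nat.cast_sub hk]
      exact_mod_cast Nat.choose_succ_right_eq n k
    · simp [Nat.choose_eq_zero_of_lt, hk, hk.trans (Nat.lt_succ_self k)]
  linear_combination t ^ (k + 1) * hchoose

lemma monotoneOn_choose_mul_pow {n r : ℕ} {t : ℝ} (ht : 0 ≤ t) (hr : r ≤ (n - r + 1) * t) :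
    MonotoneOn (fun k ↦ n.choose k * t ^ k : ℕ → ℝ) (Set.Iic r) := by
  refine monotoneOn_of_le_succ Set.ordConnected_Iic fun k _ _ hk ↦ ?_
  have hkr : (k : ℝ) + 1 ≤ r := by exact_mod_cast Set.mem_Iic.1 hk
  have hratio : (k : ℝ) + 1 ≤ (n - k) * t := by nlinarith
  refine le_of_mul_le_mul_right ?_ (show (0 : ℝ) < k + 1 by positivity)
  rw [Order.succ_eq_add_one, choose_succ_mul_pow_succ_mul]
  gcongr

lemma antitoneOn_choose_mul_pow {n r : ℕ} {t : ℝ} (ht : 0 ≤ t) (hr : (n - r) * t ≤ r + 1) :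
    AntitoneOn (fun k ↦ n.choose k * t ^ k : ℕ → ℝ) (Set.Ici r) := by
  refine antitoneOn_nat_Ici_of_succ_le fun k hk ↦ ?_
  have hrk : (r : ℝ) ≤ k := by exact_mod_cast hk
  have hratio : (n - k) * t ≤ (k : ℝ) + 1 := by nlinarith
  refine le_of_mul_le_mul_right ?_ (show (0 : ℝ) < k + 1 by positivity)
  rw [choose_succ_mul_pow_succ_mul]
  gcongr

lemma one_add_pow_le_of_forall_choose_mul_pow_le {n : ℕ} {t B : ℝ}
    (h : ∀ k, n.choose k * t ^ k ≤ B) : (1 + t) ^ n ≤ (n + 1) * B := by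
  calc (1 + t) ^ n = ∑ k ∈ range (n + 1), n.choose k * t ^ k := by
        rw [add_comm, add_pow]
        exact sum_congr rfl fun k _ ↦ by rw [one_pow, mul_one, mul_comm]
    _ ≤ #(range (n + 1)) • B := sum_le_card_nsmul _ _ _ fun k _ ↦ h k
    _ = (n + 1) * B := by rw [card_range, nsmul_eq_mul, Nat.cast_succ]

-- The saddle point is the `z ≤ 1` for which the terms `n.choose k * (M * z) ^ k` peak at `k = r`;
-- past the mean of the binomial distribution it would exceed `1`, and `z = 1` takes over.
lemma exists_one_add_mul_pow_le_sum_choose (n r : ℕ) {M : ℝ} (hM : 0 < M) :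
    ∃ z : ℝ, min 1 (r / (M * n)) ≤ z ∧ z ≤ 1 ∧
      (1 + M * z) ^ n ≤
        (n + 1) * ((∑ k ∈ range (r + 1), n.choose k * M ^ k) * z ^ r) := by
  have hterm {k : ℕ} (hk : k ≤ r) :
      n.choose k * M ^ k ≤ ∑ k ∈ range (r + 1), n.choose k * M ^ k :=
    single_le_sum (f := fun k ↦ (n.choose k * M ^ k : ℝ)) (fun _ _ ↦ by positivity)
      (mem_range.2 (Nat.lt_succ_of_le hk))
  rcases le_or_gt ((n - r) * M) (r : ℝ) with hr | hr
  · refine ⟨1, min_le_left _ _, le_rfl, ?_⟩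
    simp only [mul_one, one_pow]
    refine one_add_pow_le_of_forall_choose_mul_pow_le fun k ↦ ?_
    rcases le_total k r with hk | hk
    · exact hterm hk
    · exact (antitoneOn_choose_mul_pow hM.le (by linarith) Set.self_mem_Ici hk hk).trans
        (hterm le_rfl)
  · have hd : 0 < (n - r) * M := r.cast_nonneg.trans_lt hr
    have hnr : (0 : ℝ) < n - r := pos_of_mul_pos_left hd hM.le
    have hz : 0 ≤ r / ((n - r) * M) := by positivity
    have hpeak : (n - r) * (M * (r / ((n - r) * M))) = r := by field_simp
    refine ⟨r / ((n - r) * M), (min_le_right _ _).trans ?_, (div_le_one hd).2 hr.le, ?_⟩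
    · rw [mul_comm M]
      gcongr
      linarith [r.cast_nonneg (α := ℝ)]
    · set z : ℝ := r / ((n - r) * M)
      have ht : 0 ≤ M * z := by positivity
      refine one_add_pow_le_of_forall_choose_mul_pow_le fun k ↦ ?_
      calc n.choose k * (M * z) ^ k ≤ n.choose r * (M * z) ^ r := by
            rcases le_total k r with hk | hk
            · exact monotoneOn_choose_mul_pow ht (by linarith) hk Set.self_mem_Iic hk
            · exact antitoneOn_choose_mul_pow ht (by linarith) Set.self_mem_Ici hk hk
        _ = n.choose r * M ^ r * z ^ r := by rw [mul_pow, mul_assoc]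
        _ ≤ _ := by gcongr; exact hterm le_rfl

end BinomialTail

section HammingBall

variable {ι : Type*} [Fintype ι] [DecidableEq ι] {β : ι → Type*} [∀ i, Fintype (β i)]
  [∀ i, DecidableEq (β i)] [∀ i, Zero (β i)]

lemma filter_support_eq_piFinset (S : Finset ι) :
    ({v | ({i | v i ≠ 0} : Finset ι) = S} : Finset (∀ i, β i)) =
      Fintype.piFinset fun i ↦ if i ∈ S then ({x | x ≠ 0} : Finset (β i)) else {0} := by
  ext v
  simp only [mem_filter_univ, Fintype.mem_piFinset, Finset.ext_iff]
  refine forall_congr' fun i ↦ ?_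
  by_cases hi : i ∈ S <;> simp [hi]

lemma sum_support_eq_prod {R : Type*} [CommSemiring R] (S : Finset ι) {g : ∀ i, β i → R}
    (hg : ∀ i, g i 0 = 1) :
    ∑ v : ∀ i, β i with ({i | v i ≠ 0} : Finset ι) = S, ∏ i, g i (v i) =
      ∏ i ∈ S, ∑ x with x ≠ 0, g i x := by
  rw [filter_support_eq_piFinset, ← prod_univ_sum, ← prod_subset (subset_univ S)]
  · exact prod_congr rfl fun i hi ↦ by rw [if_pos hi]
  · intro i _ hi
    rw [if_neg hi, sum_singleton, hg]

lemma sum_hammingNorm_le_prod {R : Type*} [CommSemiring R] (r : ℕ) {g : ∀ i, β i → R}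
    (hg : ∀ i, g i 0 = 1) :
    ∑ v : ∀ i, β i with hammingNorm v ≤ r, ∏ i, g i (v i) =
      ∑ S : Finset ι with #S ≤ r, ∏ i ∈ S, ∑ x with x ≠ 0, g i x := by
  rw [← sum_fiberwise_of_maps_to (t := {S : Finset ι | #S ≤ r})
    (g := fun v : ∀ i, β i ↦ ({i | v i ≠ 0} : Finset ι))
    fun v hv ↦ by simpa [hammingNorm] using hv]
  refine sum_congr rfl fun S hS ↦ ?_
  rw [← sum_support_eq_prod S hg, filter_filter]
  refine sum_congr (filter_congr fun v _ ↦ and_iff_right_of_imp ?_) fun _ _ ↦ rfl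
  rintro rfl
  simpa [hammingNorm] using hS

lemma card_hammingNorm_le {α : Type*} [Fintype α] [DecidableEq α] [Zero α] (r : ℕ) :
    #{v : ι → α | hammingNorm v ≤ r} =
      ∑ k ∈ range (r + 1), (Fintype.card ι).choose k * (Fintype.card α - 1) ^ k := by
  have hnonzero : #{x : α | x ≠ 0} = Fintype.card α - 1 := by
    rw [filter_ne', card_erase_of_mem (mem_univ _), card_univ]
  have hsum := sum_hammingNorm_le_prod (ι := ι) (β := fun _ ↦ α) (R := ℕ) r
    (g := fun _ _ ↦ 1) fun _ ↦ rfl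
  simp only [prod_const_one, sum_const, smul_eq_mul, mul_one, prod_const, hnonzero] at hsum
  rw [hsum, ← sum_fiberwise_of_maps_to (t := range (r + 1)) (g := card)
    fun S hS ↦ by simpa [Nat.lt_succ_iff] using hS]
  refine sum_congr rfl fun k hk ↦ ?_
  have hfiber : {S ∈ ({S | #S ≤ r} : Finset (Finset ι)) | #S = k} = powersetCard k univ := by
    ext S
    have := mem_range.1 hk
    simp only [mem_filter, mem_univ, true_and, mem_powersetCard_univ]
    omega
  rw [hfiber, sum_powersetCard, smul_eq_mul, card_univ]

lemma norm_sum_hammingNorm_le_mul_pow_le {K : Type*} [NormedField K] (r : ℕ) {g : ∀ i, β i → K}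
    (hg : ∀ i, g i 0 = 1) {z : ℝ} (hz₀ : 0 ≤ z) (hz₁ : z ≤ 1) :
    ‖∑ v : ∀ i, β i with hammingNorm v ≤ r, ∏ i, g i (v i)‖ * z ^ r ≤
      ∏ i, (1 + ‖∑ x with x ≠ 0, g i x‖ * z) := by
  rw [sum_hammingNorm_le_prod r hg, prod_one_add]
  set a : ι → ℝ := fun i ↦ ‖∑ x with x ≠ 0, g i x‖
  calc _ ≤ (∑ S : Finset ι with #S ≤ r, ∏ i ∈ S, a i) * z ^ r := by
        gcongr
        exact (norm_sum_le _ _).trans_eq (sum_congr rfl fun S _ ↦ norm_prod _ _)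
    _ = ∑ S : Finset ι with #S ≤ r, (∏ i ∈ S, a i) * z ^ r := sum_mul _ _ _
    _ ≤ ∑ S : Finset ι with #S ≤ r, ∏ i ∈ S, a i * z := by
        refine sum_le_sum fun S hS ↦ ?_
        rw [prod_mul_distrib, prod_const]
        gcongr ?_ * ?_
        exact pow_le_pow_of_le_one hz₀ hz₁ ((mem_filter_univ S).1 hS)
    _ ≤ ∑ S ∈ univ.powerset, ∏ i ∈ S, a i * z := by
        refine sum_le_sum_of_subset_of_nonneg (by simp) fun S _ _ ↦ ?_
        exact prod_nonneg fun i _ ↦ by positivity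

end HammingBall

section CharacterSum

lemma norm_sum_ne_zero_addChar {G : Type*} [AddGroup G] [Fintype G] [DecidableEq G]
    (χ : AddChar G ℂ) :
    ‖∑ x with x ≠ 0, χ x‖ = if χ = 0 then (Fintype.card G : ℝ) - 1 else 1 := by
  have hsum : ∑ x with x ≠ 0, χ x = (if χ = 0 then (Fintype.card G : ℂ) else 0) - 1 := by
    rw [← AddChar.sum_eq_ite, filter_ne', ← AddChar.map_zero_eq_one χ]
    exact sum_erase_eq_sub (mem_univ _)
  rw [hsum]
  split_ifs
  · have hcard : (1 : ℝ) ≤ Fintype.card G := by exact_mod_cast Fintype.card_pos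
    rw [← Complex.ofReal_natCast, ← Complex.ofReal_one, ← Complex.ofReal_sub, Complex.norm_real,
      Real.norm_of_nonneg (sub_nonneg.2 hcard)]
  · simp

lemma norm_sum_hammingNorm_le_addChar_mul_pow_le {ι G : Type*} [Fintype ι] [DecidableEq ι]
    [AddGroup G] [Fintype G] [DecidableEq G] (r : ℕ) (χ : ι → AddChar G ℂ) {z : ℝ}
    (hz₀ : 0 ≤ z) (hz₁ : z ≤ 1) :
    ‖∑ v : ι → G with hammingNorm v ≤ r, ∏ i, χ i (v i)‖ * z ^ r ≤
      (1 + z) ^ hammingNorm χ *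
        (1 + (Fintype.card G - 1) * z) ^ (Fintype.card ι - hammingNorm χ) := by
  refine (norm_sum_hammingNorm_le_mul_pow_le r (fun i ↦ (χ i).map_zero_eq_one) hz₀ hz₁).trans_eq ?_
  have hcompl : #{i | ¬χ i ≠ 0} = Fintype.card ι - hammingNorm χ := by
    rw [← compl_filter, card_compl, hammingNorm]
  rw [← prod_filter_mul_prod_filter_not univ (fun i ↦ χ i ≠ 0), ← hcompl, hammingNorm]
  congr 1
  · refine prod_eq_pow_card fun i hi ↦ ?_
    rw [norm_sum_ne_zero_addChar, if_neg ((mem_filter_univ i).1 hi), one_mul]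
  · refine prod_eq_pow_card fun i hi ↦ ?_
    rw [norm_sum_ne_zero_addChar, if_pos (not_not.1 ((mem_filter_univ i).1 hi))]

lemma abs_card_mul_card_fiber_sub_card_le {α R : Type*} [CommRing R] [Fintype R] [DecidableEq R]
    {ψ : AddChar R ℂ} (hψ : ψ.IsPrimitive) (s : Finset α) (f : α → R) (a : R) :
    |(Fintype.card R : ℝ) * #{v ∈ s | f v = a} - #s| ≤
      ∑ l with l ≠ 0, ‖∑ v ∈ s, ψ (l * f v)‖ := by
  have hcount : (Fintype.card R : ℂ) * #{v ∈ s | f v = a} =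
      ∑ l, ∑ v ∈ s, ψ (l * (f v - a)) := by
    rw [sum_comm]
    simp only [AddChar.sum_mulShift _ hψ, sub_eq_zero]
    simp [← sum_filter, mul_comm]
  have hnontrivial : (Fintype.card R : ℂ) * #{v ∈ s | f v = a} - #s =
      ∑ l with l ≠ 0, ψ (-(l * a)) * ∑ v ∈ s, ψ (l * f v) := by
    rw [hcount, filter_ne', ← add_sum_erase _ _ (mem_univ 0)]
    simp only [zero_mul, AddChar.map_zero_eq_one, sum_const, nsmul_one, add_sub_cancel_left,
      mul_sum, ← AddChar.map_add_eq_mul]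
    exact sum_congr rfl fun l _ ↦ sum_congr rfl fun v _ ↦ congrArg ψ (by ring)
  calc |(Fintype.card R : ℝ) * #{v ∈ s | f v = a} - #s|
      = ‖(Fintype.card R : ℂ) * #{v ∈ s | f v = a} - #s‖ := by
        rw [← Real.norm_eq_abs, ← Complex.norm_real]
        push_cast
        rfl
    _ ≤ ∑ l with l ≠ 0, ‖ψ (-(l * a)) * ∑ v ∈ s, ψ (l * f v)‖ := by
        rw [hnontrivial]
        exact norm_sum_le _ _
    _ = ∑ l with l ≠ 0, ‖∑ v ∈ s, ψ (l * f v)‖ := by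
        simp only [norm_mul, AddChar.norm_apply, one_mul]

end CharacterSum

section SymplecticBall

variable {F : Type} [Field F]

/-- The additive character `x ↦ ψ ⟨a, x⟩_S` of the symplectic plane `F × F`; the characters
`v ↦ ψ ⟨u, v⟩_S` of `F^{2n}` are products of these over the coordinates. -/
def sympChar (ψ : AddChar F ℂ) (a : F × F) : AddChar (F × F) ℂ :=
  ψ.compAddMonoidHom
    ((AddMonoidHom.mulLeft a.1).comp (AddMonoidHom.snd F F) -
      (AddMonoidHom.mulLeft a.2).comp (AddMonoidHom.fst F F))

lemma sympChar_apply (ψ : AddChar F ℂ) (a x : F × F) :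
    sympChar ψ a x = ψ (a.1 * x.2 - a.2 * x.1) := rfl

lemma sympChar_eq_zero_iff {ψ : AddChar F ℂ} (hψ : ψ.IsPrimitive) {a : F × F} :
    sympChar ψ a = 0 ↔ a = 0 := by
  refine ⟨fun h ↦ ?_, ?_⟩
  · have hval (x : F × F) : ψ (a.1 * x.2 - a.2 * x.1) = 1 := AddChar.eq_zero_iff.1 h x
    refine Prod.ext (by_contra fun ha ↦ hψ ha ?_) (by_contra fun ha ↦ hψ (neg_ne_zero.2 ha) ?_)
    · ext y
      simpa using hval (0, y)
    · ext y
      simpa using hval (y, 0)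
  · rintro rfl
    ext x
    simp [sympChar_apply]

lemma addChar_sympInner (ψ : AddChar F ℂ) {n : ℕ} (u v : Fin n → F × F) :
    ψ (sympInner u v) = ∏ i, sympChar ψ (u i) (v i) :=
  map_prod ψ.toMonoidHom
    (fun i ↦ Multiplicative.ofAdd ((u i).1 * (v i).2 - (u i).2 * (v i).1)) univ

lemma sympInner_smul_left (l : F) {n : ℕ} (u v : Fin n → F × F) :
    sympInner (l • u) v = l * sympInner u v := by
  simp only [sympInner, Pi.smul_apply, Prod.smul_fst, Prod.smul_snd, smul_eq_mul, mul_sum]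
  exact sum_congr rfl fun i _ ↦ by ring

variable [DecidableEq F]

lemma sympWt_smul {l : F} (hl : l ≠ 0) {n : ℕ} (u : Fin n → F × F) :
    sympWt (l • u) = sympWt u :=
  hammingNorm_smul (fun _ _ _ h ↦ smul_right_injective (F × F) hl h) u

lemma sympWt_le {n : ℕ} (u : Fin n → F × F) : sympWt u ≤ n :=
  hammingNorm_le_card_fintype.trans_eq (Fintype.card_fin n)

lemma hammingNorm_sympChar {ψ : AddChar F ℂ} (hψ : ψ.IsPrimitive) {n : ℕ} (u : Fin n → F × F) :
    hammingNorm (fun i ↦ sympChar ψ (u i)) = sympWt u := by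
  simp only [sympWt, hammingNorm, ne_eq, sympChar_eq_zero_iff hψ]

variable [Fintype F]

-- `sympBall` filters with the classical decidability instance, hence not syntactically equal.
lemma sympBall_eq_filter (n r : ℕ) :
    sympBall F n r = ({v | hammingNorm v ≤ r} : Finset (Fin n → F × F)) :=
  filter_congr_decidable _ _ _

lemma card_sympBall (n r : ℕ) : #(sympBall F n r) = volS (Fintype.card F) n r := by
  simp only [sympBall_eq_filter, card_hammingNorm_le, Fintype.card_fin, Fintype.card_prod, volS, sq]

lemma norm_sum_sympBall_addChar_mul_pow_le {ψ : AddChar F ℂ} (hψ : ψ.IsPrimitive) {n : ℕ} (r : ℕ)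
    (u : Fin n → F × F) {z : ℝ} (hz₀ : 0 ≤ z) (hz₁ : z ≤ 1) :
    ‖∑ v ∈ sympBall F n r, ψ (sympInner u v)‖ * z ^ r ≤
      (1 + z) ^ sympWt u * (1 + ((Fintype.card F : ℝ) ^ 2 - 1) * z) ^ (n - sympWt u) := by
  have h := norm_sum_hammingNorm_le_addChar_mul_pow_le r (fun i ↦ sympChar ψ (u i)) hz₀ hz₁
  simp only [hammingNorm_sympChar hψ, ← addChar_sympInner, ← sympBall_eq_filter, Fintype.card_prod,
    ← pow_two, Fintype.card_fin, Nat.cast_pow] at h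
  exact h

lemma abs_card_mul_card_sympInner_eq_sub_volS_mul_pow_le {n : ℕ} (r : ℕ) (u : Fin n → F × F)
    (a : F) {z : ℝ} (hz₀ : 0 ≤ z) (hz₁ : z ≤ 1) :
    |(Fintype.card F : ℝ) * #{v ∈ sympBall F n r | sympInner u v = a} -
        volS (Fintype.card F) n r| * z ^ r ≤
      Fintype.card F * ((1 + z) ^ sympWt u *
        (1 + ((Fintype.card F : ℝ) ^ 2 - 1) * z) ^ (n - sympWt u)) := by
  obtain ⟨ψ, hψ⟩ : ∃ ψ : AddChar F ℂ, ψ.IsPrimitive :=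
    ⟨_, AddChar.FiniteField.primitiveChar_to_Complex_isPrimitive F⟩
  set B : ℝ := (1 + z) ^ sympWt u *
    (1 + ((Fintype.card F : ℝ) ^ 2 - 1) * z) ^ (n - sympWt u)
  have hchar (l : F) (hl : l ≠ 0) :
      ‖∑ v ∈ sympBall F n r, ψ (l * sympInner u v)‖ * z ^ r ≤ B := by
    simpa only [sympInner_smul_left, sympWt_smul hl] using
      norm_sum_sympBall_addChar_mul_pow_le hψ r (l • u) hz₀ hz₁
  have hB : 0 ≤ B := le_trans (by positivity) (hchar 1 one_ne_zero)
  rw [← card_sympBall]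
  calc _ ≤ (∑ l with l ≠ 0, ‖∑ v ∈ sympBall F n r, ψ (l * sympInner u v)‖) * z ^ r := by
        gcongr
        exact abs_card_mul_card_fiber_sub_card_le hψ _ _ a
    _ ≤ #{l : F | l ≠ 0} • B := by
        rw [sum_mul]
        exact sum_le_card_nsmul _ _ _ fun l hl ↦ hchar l ((mem_filter_univ l).1 hl)
    _ ≤ Fintype.card F * B := by
        rw [nsmul_eq_mul]
        gcongr
        exact card_le_univ _

lemma cast_volS {q : ℕ} (hq : 1 ≤ q) (n r : ℕ) :
    (volS q n r : ℝ) = ∑ k ∈ range (r + 1), n.choose k * ((q : ℝ) ^ 2 - 1) ^ k := by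
  simp [volS, Nat.cast_sub (Nat.one_le_pow 2 q hq)]

lemma abs_card_mul_card_sympInner_eq_sub_volS_le {n r : ℕ} (u : Fin n → F × F) (a : F) {z₀ : ℝ}
    (hz₀ : 0 < z₀) (hz₀_le : z₀ ≤ min 1 (r / (((Fintype.card F : ℝ) ^ 2 - 1) * n))) :
    |(Fintype.card F : ℝ) * #{v ∈ sympBall F n r | sympInner u v = a} -
        volS (Fintype.card F) n r| ≤
      Fintype.card F * (n + 1) *
        ((1 + z₀) / (1 + ((Fintype.card F : ℝ) ^ 2 - 1) * z₀)) ^ sympWt u *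
          volS (Fintype.card F) n r := by
  have hq : (2 : ℝ) ≤ Fintype.card F := by exact_mod_cast Fintype.one_lt_card (α := F)
  set q : ℝ := (Fintype.card F : ℝ)
  set M : ℝ := q ^ 2 - 1
  set V : ℝ := (volS (Fintype.card F) n r : ℝ)
  have hM : 1 < M := by nlinarith
  obtain ⟨z, hz_ge, hz_le, hvol⟩ :=
    exists_one_add_mul_pow_le_sum_choose n r (zero_lt_one.trans hM)
  rw [← cast_volS Fintype.card_pos] at hvol
  have hz : z₀ ≤ z := hz₀_le.trans hz_ge
  have hz_pos : 0 < z := hz₀.trans_le hz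
  have hdecay : (1 + z) / (1 + M * z) ≤ (1 + z₀) / (1 + M * z₀) := by
    rw [div_le_div_iff₀ (by positivity) (by positivity)]
    nlinarith
  have hsplit : (1 + M * z) ^ (n - sympWt u) = (1 + M * z) ^ n / (1 + M * z) ^ sympWt u := by
    rw [pow_sub₀ _ (by positivity) (sympWt_le u), div_eq_mul_inv]
  refine le_of_mul_le_mul_right ?_ (pow_pos hz_pos r)
  calc _ ≤ q * ((1 + z) ^ sympWt u * (1 + M * z) ^ (n - sympWt u)) :=
        abs_card_mul_card_sympInner_eq_sub_volS_mul_pow_le r u a hz_pos.le hz_le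
    _ = q * (((1 + z) / (1 + M * z)) ^ sympWt u * (1 + M * z) ^ n) := by
        rw [hsplit, div_pow]
        ring
    _ ≤ q * (((1 + z₀) / (1 + M * z₀)) ^ sympWt u * ((n + 1) * (V * z ^ r))) := by gcongr
    _ = q * (n + 1) * ((1 + z₀) / (1 + M * z₀)) ^ sympWt u * V * z ^ r := by ring

end SymplecticBall

section Asymptotics

open Filter Topology

lemma exists_pos_eventually_mul_pow_le_rpow_neg {b ρ τ : ℝ} (hb : 1 < b) (hρ₀ : 0 < ρ)
    (hρ₁ : ρ < 1) {C : ℝ} (hC : 0 ≤ C) (hτ : 0 < τ) :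
    ∃ c : ℝ, 0 < c ∧ ∀ᶠ n : ℕ in atTop, ∀ w : ℕ, τ * n ≤ w →
      C * (n + 1) * ρ ^ w ≤ b ^ (-(c * n)) := by
  have hb₀ : 0 < b := zero_lt_one.trans hb
  -- Half of the decay `ρ ^ (τ * n) = σ ^ (2 * n)` absorbs the linear factor.
  set σ : ℝ := ρ ^ (τ / 2) with hσ
  have hσ₀ : 0 < σ := Real.rpow_pos_of_pos hρ₀ _
  have hσ₁ : σ < 1 := Real.rpow_lt_one hρ₀.le hρ₁ (half_pos hτ)
  refine ⟨-Real.logb b σ, neg_pos.2 (Real.logb_neg hb hσ₀ hσ₁), ?_⟩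
  have hlim : Tendsto (fun n : ℕ ↦ C * (n + 1) * σ ^ n) atTop (𝓝 0) := by
    have h := ((tendsto_self_mul_const_pow_of_lt_one hσ₀.le hσ₁).add
      (tendsto_pow_atTop_nhds_zero_of_lt_one hσ₀.le hσ₁)).const_mul C
    simp only [add_zero, mul_zero] at h
    exact h.congr fun n ↦ by ring
  filter_upwards [hlim.eventually_le_const zero_lt_one] with n hn w hw
  have hpow : ρ ^ w ≤ σ ^ n * σ ^ n := by
    calc ρ ^ w = ρ ^ (w : ℝ) := (Real.rpow_natCast ρ w).symm
      _ ≤ ρ ^ (τ * n) := Real.rpow_le_rpow_of_exponent_ge hρ₀ hρ₁.le hw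
      _ = σ ^ n * σ ^ n := by
        rw [← mul_pow, hσ, ← Real.rpow_add hρ₀, add_halves, Real.rpow_mul_natCast hρ₀.le]
  calc C * (n + 1) * ρ ^ w ≤ C * (n + 1) * (σ ^ n * σ ^ n) := by gcongr
    _ = C * (n + 1) * σ ^ n * σ ^ n := by ring
    _ ≤ 1 * σ ^ n := by gcongr
    _ = b ^ (-(-Real.logb b σ * n)) := by
      rw [one_mul, neg_mul, neg_neg, Real.rpow_mul_natCast hb₀.le, Real.rpow_logb hb₀ hb.ne' hσ₀]

end Asymptotics

theorem symp_one_vector_intersection_bound_general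
    (F : Type) [Field F] [Fintype F] [DecidableEq F] (τ δ : ℝ) (hτ : 0 < τ) (hδ : 0 < δ) :
    ∃ c : ℝ, 0 < c ∧ ∃ N : ℕ, ∀ n : ℕ, N ≤ n →
      ∀ u : Fin n → F × F, τ * n ≤ sympWt u → ∀ a : F,
        (1 - (Fintype.card F : ℝ) ^ (-(c * n))) / Fintype.card F *
              volS (Fintype.card F) n ⌊δ * n⌋₊ ≤
            #{v ∈ sympBall F n ⌊δ * n⌋₊ | sympInner u v = a} ∧
          #{v ∈ sympBall F n ⌊δ * n⌋₊ | sympInner u v = a} ≤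
            (1 + (Fintype.card F : ℝ) ^ (-(c * n))) / Fintype.card F *
              volS (Fintype.card F) n ⌊δ * n⌋₊ := by
  have hq : (2 : ℝ) ≤ Fintype.card F := by exact_mod_cast Fintype.one_lt_card (α := F)
  have hM : 1 < (Fintype.card F : ℝ) ^ 2 - 1 := by nlinarith
  set z₀ : ℝ := min 1 (δ / 2 / ((Fintype.card F : ℝ) ^ 2 - 1))
  have hz₀ : 0 < z₀ := by positivity
  have hρ : (1 + z₀) / (1 + ((Fintype.card F : ℝ) ^ 2 - 1) * z₀) < 1 := by
    rw [div_lt_one (by positivity)]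
    nlinarith
  obtain ⟨c, hc, hdecay⟩ := exists_pos_eventually_mul_pow_le_rpow_neg
    (one_lt_two.trans_le hq) (by positivity) hρ (Nat.cast_nonneg (Fintype.card F)) hτ
  have hlarge : ∀ᶠ n : ℕ in Filter.atTop, 2 ≤ δ * n :=
    (tendsto_natCast_atTop_atTop.const_mul_atTop hδ).eventually_ge_atTop 2
  obtain ⟨N, hN⟩ := Filter.eventually_atTop.1 (hdecay.and hlarge)
  refine ⟨c, hc, N, fun n hn u hu a ↦ ?_⟩
  obtain ⟨hdecay_n, hδn⟩ := hN n hn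
  have hradius : δ / 2 * n ≤ ⌊δ * n⌋₊ := by
    linarith [Nat.sub_one_lt_floor (δ * n)]
  have hz₀_le : z₀ ≤ min 1 (⌊δ * n⌋₊ / (((Fintype.card F : ℝ) ^ 2 - 1) * n)) := by
    have hn₀ : (0 : ℝ) < n := pos_of_mul_pos_right (by linarith) hδ.le
    refine min_le_min_left 1 ?_
    rw [← mul_div_mul_right _ _ hn₀.ne']
    gcongr
  have hdev := (abs_card_mul_card_sympInner_eq_sub_volS_le u a hz₀ hz₀_le).trans
    (mul_le_mul_of_nonneg_right (hdecay_n _ hu) (Nat.cast_nonneg _))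
  rw [div_mul_eq_mul_div, div_mul_eq_mul_div, div_le_iff₀' (by positivity),
    le_div_iff₀' (by positivity)]
  constructor <;> linarith [abs_le.1 hdev]

/-- For a prime power `q` (realized as the cardinality of a finite field `F`)
and constants `0 < τ ≤ δ < 1 - 1/q²`, there exist `c > 0` and `N` such that for all `n ≥ N`,
with `d - 1 = ⌊δn⌋`: for every nonzero `u ∈ B_q^S(2n, d-1)` with `wt_S(u) ≥ τn`, the set
`B_q^S(2n, d-1) ∩ {v : ⟨u,v⟩_S = 0}` has cardinality between
`((1 - q^{-cn})/q)·Vol_q^S(2n,d-1)` and `((1 + q^{-cn})/q)·Vol_q^S(2n,d-1)`. -/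
theorem symp_one_vector_intersection_bound
    (q : ℕ) (F : Type) [Field F] [Fintype F] [DecidableEq F] (hF : Fintype.card F = q)
    (τ δ : ℝ) (hτ0 : 0 < τ) (hτδ : τ ≤ δ) (hδ : δ < 1 - 1 / (q : ℝ) ^ 2) :
    ∃ c : ℝ, 0 < c ∧ ∃ N : ℕ, ∀ n : ℕ, N ≤ n →
      ∀ u : Fin n → F × F, u ≠ 0 → u ∈ sympBall F n ⌊δ * (n : ℝ)⌋₊ →
        τ * (n : ℝ) ≤ (sympWt u : ℝ) →
        (1 - (q : ℝ) ^ (-(c * (n : ℝ)))) / (q : ℝ) * (volS q n ⌊δ * (n : ℝ)⌋₊ : ℝ) ≤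
            (((sympBall F n ⌊δ * (n : ℝ)⌋₊).filter fun v => sympInner u v = 0).card : ℝ) ∧
          (((sympBall F n ⌊δ * (n : ℝ)⌋₊).filter fun v => sympInner u v = 0).card : ℝ) ≤
            (1 + (q : ℝ) ^ (-(c * (n : ℝ)))) / (q : ℝ) * (volS q n ⌊δ * (n : ℝ)⌋₊ : ℝ) := by
  subst hF
  obtain ⟨c, hc, N, hN⟩ :=
    symp_one_vector_intersection_bound_general F τ δ hτ0 (hτ0.trans_le hτδ)
  exact ⟨c, hc, N, fun n hn u _ _ hu ↦ hN n hn u hu 0⟩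
end
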